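/- arXiv:0807.2686 — 4 statements merged into one kernel-verified Lean document; each statement's English description precedes it below -/
import Mathlib

section
/- Let (S, n) be a Cohen–Macaulay local ring of dimension d with infinite residue field and let R = S/p, where p is a minimal prime ideal of S. Let x_1, …, x_d be a system of parameters of R. Then there exists a system of parameters a_1, …, a_d of S such that x_i = a_i + p for each i. -/
open IsLocalRing

/-- The depth of a module over a local ring: the supremum of the lengths of
`M`-regular sequences contained in the maximal ideal. -/
noncomputable def moduleDepth (R M : Type*) [CommRing R] [IsLocalRing R]
    [AddCommGroup M] [Module R M] : ℕ∞ :=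
  sSup {n : ℕ∞ | ∃ rs : List R, (∀ r ∈ rs, r ∈ maximalIdeal R) ∧
    RingTheory.Sequence.IsRegular (R := R) M rs ∧ (rs.length : ℕ∞) = n}

/-- A local ring is Cohen–Macaulay if its depth equals its Krull dimension. -/
def IsCohenMacaulayLocalRing (R : Type*) [CommRing R] [IsLocalRing R] : Prop :=
  (moduleDepth R R : WithBot ℕ∞) = ringKrullDim R

/-! Write `dim I` for the Krull dimension of `S ⧸ I` and let `b₁, …, b_d` be arbitrary lifts of the
`xᵢ`, so that `dim (p + (b₁, …, b_d)) = 0`. The lifts are corrected by elements of `p` one at a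
time, each correction lowering the dimension of the quotient by the elements chosen so far. If
`dim I ≤ n + 1` and `n + 1` lifts remain, a minimal prime `Q` of `I` with `dim Q = n + 1` cannot
contain both `p` and the next lift `b`: modulo `Q` the remaining `n` lifts would then cut the
dimension down to zero. By prime avoidance for the coset `b + p` there is `q ∈ p` such that `b + q`
lies in no such `Q`, and therefore `dim (I + (b + q)) ≤ n`. -/

section CommRing

variable {R : Type*} [CommRing R]

theorem exists_add_notMem_of_finite {s : Set (Ideal R)} (hs : s.Finite)
    (hprime : ∀ Q ∈ s, Q.IsPrime) {J : Ideal R} {b : R} (hb : ∀ Q ∈ s, J ≤ Q → b ∉ Q) :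
    ∃ q ∈ J, ∀ Q ∈ s, b + q ∉ Q := by
  let A : Set (Ideal R) := {Q ∈ s | b ∈ Q}
  -- Avoiding `A` avoids every prime below a member of `A`, so `q` need only lie in the others.
  let B : Set (Ideal R) := {Q ∈ s | ∀ M ∈ A, ¬ Q ≤ M}
  have hB : B.Finite := hs.sep _
  have not_subset : ¬ ((J ⊓ hB.toFinset.inf id : Ideal R) : Set R) ⊆ ⋃ Q ∈ A, (Q : Set R) := by
    rw [Ideal.subset_union_prime_finite (hs.sep _) (f := fun Q ↦ Q) ⊥ ⊥
      fun Q hQ _ _ ↦ hprime Q hQ.1]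
    rintro ⟨M, hM, hle⟩
    have hMprime : M.IsPrime := hprime M hM.1
    rcases hMprime.inf_le.1 hle with hJM | hBM
    · exact hb M hM.1 hJM hM.2
    · obtain ⟨Q, hQ, hQM⟩ := hMprime.inf_le'.1 hBM
      exact (hB.mem_toFinset.1 hQ).2 M hM hQM
  obtain ⟨q, ⟨hqJ, hqB⟩, hqA⟩ := Set.not_subset.1 not_subset
  have add_notMem_A : ∀ M ∈ A, b + q ∉ M := fun M hM hbq ↦
    hqA (Set.mem_biUnion hM ((Ideal.add_mem_iff_right M hM.2).1 hbq))
  refine ⟨q, hqJ, fun Q hQ hbq ↦ ?_⟩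
  by_cases hQA : ∃ M ∈ A, Q ≤ M
  · obtain ⟨M, hM, hQM⟩ := hQA
    exact add_notMem_A M hM (hQM hbq)
  · have hQB : Q ∈ B := ⟨hQ, fun M hM hQM ↦ hQA ⟨M, hM, hQM⟩⟩
    have hqQ : q ∈ Q := Finset.inf_le (f := id) (hB.mem_toFinset.2 hQB) hqB
    exact add_notMem_A Q ⟨hQ, (Ideal.add_mem_iff_left Q hqQ).1 hbq⟩ hbq

theorem ringKrullDim_quotient_le_iff_coheight_le {I : Ideal R} {n : ℕ∞} :
    ringKrullDim (R ⧸ I) ≤ n ↔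
      ∀ P : PrimeSpectrum R, I ≤ P.asIdeal → Order.coheight P ≤ n := by
  rw [ringKrullDim_quotient]
  constructor
  · intro hI P hIP
    have hle : Order.krullDim (Set.Ici P) ≤
        Order.krullDim (PrimeSpectrum.zeroLocus (I : Set R)) :=
      Order.krullDim_le_of_strictMono (fun Q ↦ ⟨Q, hIP.trans Q.2⟩) fun _ _ h ↦ h
    rw [← Order.coheight_eq_krullDim_Ici] at hle
    exact WithBot.coe_le_coe.1 (hle.trans hI)
  · intro h
    rw [Order.krullDim_eq_iSup_coheight]
    refine iSup_le fun P ↦ WithBot.coe_le_coe.2 ?_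
    exact (Order.coheight_le_coheight_apply_of_strictMono Subtype.val (fun _ _ h ↦ h) P).trans
      (h P P.2)

theorem ringKrullDim_quotient_sup_span_singleton_le {I : Ideal R} {a : R} {n : ℕ∞}
    (hI : ringKrullDim (R ⧸ I) ≤ (n + 1 : ℕ∞))
    (ha : ∀ Q ∈ I.minimalPrimes, a ∈ Q → ringKrullDim (R ⧸ Q) ≤ n) :
    ringKrullDim (R ⧸ I ⊔ Ideal.span {a}) ≤ n := by
  rw [ringKrullDim_quotient_le_iff_coheight_le]
  intro P hP
  have haP : a ∈ P.asIdeal := hP (Ideal.mem_sup_right (Ideal.mem_span_singleton_self a))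
  obtain ⟨Q, hQ, hQP⟩ := Ideal.exists_minimalPrimes_le (le_sup_left.trans hP)
  by_cases haQ : a ∈ Q
  · exact ringKrullDim_quotient_le_iff_coheight_le.1 (ha Q hQ haQ) P hQP
  · let Q' : PrimeSpectrum R := ⟨Q, hQ.1.1⟩
    have hlt : Q' < P := lt_of_le_not_ge hQP fun hPQ ↦ haQ (hPQ haP)
    have hcoheight : Order.coheight P + 1 ≤ n + 1 :=
      (Order.coheight_add_one_le hlt).trans
        (ringKrullDim_quotient_le_iff_coheight_le.1 hI Q' hQ.1.2)
    exact (ENat.add_le_add_iff_right ENat.one_ne_top).1 hcoheight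

theorem ringKrullDim_quotient_eq_zero_iff_radical_eq_maximalIdeal [IsLocalRing R] {I : Ideal R} :
    ringKrullDim (R ⧸ I) = 0 ↔ I.radical = maximalIdeal R := by
  rcases eq_or_ne I ⊤ with rfl | hI
  · simpa [ringKrullDim_eq_bot_of_subsingleton, Ideal.radical_top] using
      (maximalIdeal.isMaximal R).ne_top.symm
  have : Nontrivial (R ⧸ I) := Ideal.Quotient.nontrivial_iff.2 hI
  rw [← ringKrullDimZero_iff_ringKrullDim_eq_zero,
    Ideal.krullDimLE_zero_quotient_iff_forall_minimalPrimes_isMaximal]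
  constructor
  · intro hmax
    apply ((maximalIdeal.isMaximal R).isPrime.radical_le_iff.2 (le_maximalIdeal hI)).antisymm
    rw [← Ideal.sInf_minimalPrimes]
    exact le_sInf fun Q hQ ↦ (eq_maximalIdeal (hmax Q hQ)).ge
  · intro hrad Q hQ
    have hle : maximalIdeal R ≤ Q := hrad ▸ hQ.1.1.radical_le_iff.2 hQ.1.2
    exact (maximalIdeal.isMaximal R).eq_of_le hQ.1.1.ne_top hle ▸ maximalIdeal.isMaximal R

theorem span_singleton_add_sup_eq {J : Ideal R} {b q : R} (hq : q ∈ J) :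
    Ideal.span {b + q} ⊔ J = Ideal.span {b} ⊔ J := by
  have hqJ (c : R) : q ∈ Ideal.span {c} ⊔ J := Ideal.mem_sup_right hq
  apply le_antisymm <;> refine sup_le ((Ideal.span_singleton_le_iff_mem _).2 ?_) le_sup_right
  · exact add_mem (Ideal.mem_sup_left (Ideal.mem_span_singleton_self b)) (hqJ b)
  · exact (Ideal.add_mem_iff_left _ (hqJ _)).1
      (Ideal.mem_sup_left (Ideal.mem_span_singleton_self (b + q)))

theorem span_range_fin_succ {n : ℕ} (b : Fin (n + 1) → R) :
    Ideal.span (Set.range b) = Ideal.span {b 0} ⊔ Ideal.span (Set.range (Fin.tail b)) := by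
  rw [← Ideal.span_insert, ← Fin.range_cons, Fin.cons_self_tail]

theorem ringKrullDim_quotient_le_of_le {I J : Ideal R} (h : I ≤ J) :
    ringKrullDim (R ⧸ J) ≤ ringKrullDim (R ⧸ I) :=
  ringKrullDim_le_of_surjective (Ideal.Quotient.factor h) (Ideal.Quotient.factor_surjective h)

theorem ringKrullDim_quotient_map_mk (I J : Ideal R) :
    ringKrullDim ((R ⧸ I) ⧸ J.map (Ideal.Quotient.mk I)) = ringKrullDim (R ⧸ I ⊔ J) :=
  ringKrullDim_eq_of_ringEquiv (DoubleQuot.quotQuotEquivQuotSup I J)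

section IsNoetherianRing

variable [IsNoetherianRing R]

theorem ringKrullDim_quotient_le_ringKrullDim_quotient_sup_span_add_encard (I : Ideal R)
    {s : Set R} (hs : s ⊆ I.jacobson) :
    ringKrullDim (R ⧸ I) ≤ ringKrullDim (R ⧸ I ⊔ Ideal.span s) + s.encard := by
  have himage : Ideal.Quotient.mk I '' s ⊆ Ring.jacobson (R ⧸ I) := by
    rintro _ ⟨x, hx, rfl⟩
    rw [← Ideal.jacobson_bot, SetLike.mem_coe, ← Ideal.mem_comap,
      Ideal.comap_jacobson_of_surjective Ideal.Quotient.mk_surjective, ← RingHom.ker_eq_comap_bot,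
      Ideal.mk_ker]
    exact hs hx
  calc ringKrullDim (R ⧸ I)
    _ ≤ ringKrullDim ((R ⧸ I) ⧸ Ideal.span (Ideal.Quotient.mk I '' s)) +
          (Ideal.Quotient.mk I '' s).encard :=
      ringKrullDim_le_ringKrullDim_quotient_add_encard _ himage
    _ ≤ ringKrullDim (R ⧸ I ⊔ Ideal.span s) + s.encard := by
      rw [← Ideal.map_span, ringKrullDim_quotient_map_mk]
      gcongr
      exact_mod_cast Set.encard_image_le _ s

theorem exists_ringKrullDim_quotient_sup_span_singleton_add_le {I J : Ideal R} {b : R} {n : ℕ∞}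
    (hI : ringKrullDim (R ⧸ I) ≤ (n + 1 : ℕ∞))
    (hb : ∀ Q ∈ I.minimalPrimes, J ≤ Q → b ∈ Q → ringKrullDim (R ⧸ Q) ≤ n) :
    ∃ q ∈ J, ringKrullDim (R ⧸ I ⊔ Ideal.span {b + q}) ≤ n := by
  have hfinite : {Q ∈ I.minimalPrimes | ¬ ringKrullDim (R ⧸ Q) ≤ n}.Finite :=
    (Ideal.finite_minimalPrimes_of_isNoetherianRing R I).sep _
  obtain ⟨q, hq, hbq⟩ := exists_add_notMem_of_finite hfinite (fun Q hQ ↦ hQ.1.1.1)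
    (fun Q hQ hJQ hbQ ↦ hQ.2 (hb Q hQ.1 hJQ hbQ))
  refine ⟨q, hq, ringKrullDim_quotient_sup_span_singleton_le hI fun Q hQ hmem ↦ ?_⟩
  by_contra hdim
  exact hbq Q ⟨hQ, hdim⟩ hmem

theorem exists_ringKrullDim_quotient_sup_span_add_le (J : Ideal R) (k : ℕ∞) {n : ℕ} (I : Ideal R)
    (b : Fin n → R) (hb : ∀ i, b i ∈ Ring.jacobson R)
    (hJ : ringKrullDim (R ⧸ I ⊔ J ⊔ Ideal.span (Set.range b)) ≤ k)
    (hI : ringKrullDim (R ⧸ I) ≤ (k + n : ℕ∞)) :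
    ∃ q : Fin n → R, (∀ i, q i ∈ J) ∧
      ringKrullDim (R ⧸ I ⊔ Ideal.span (Set.range (b + q))) ≤ k := by
  induction n generalizing I with
  | zero => exact ⟨0, fun i ↦ i.elim0, by
      rw [Set.range_eq_empty, Ideal.span_empty, sup_bot_eq]
      simpa using hI⟩
  | succ n ih =>
    have hminimal : ∀ Q ∈ I.minimalPrimes, J ≤ Q → b 0 ∈ Q →
        ringKrullDim (R ⧸ Q) ≤ (k + n : ℕ∞) := by
      intro Q hQ hJQ hbQ
      have hle : I ⊔ J ⊔ Ideal.span (Set.range b) ≤ Q ⊔ Ideal.span (Set.range (Fin.tail b)) := by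
        rw [span_range_fin_succ, ← sup_assoc]
        exact sup_le_sup_right
          (sup_le (sup_le hQ.1.2 hJQ) ((Ideal.span_singleton_le_iff_mem Q).2 hbQ)) _
      have hjacobson : Set.range (Fin.tail b) ⊆ Q.jacobson :=
        Set.range_subset_iff.2 fun i ↦ Ideal.ringJacobson_le_jacobson (hb i.succ)
      calc ringKrullDim (R ⧸ Q)
        _ ≤ ringKrullDim (R ⧸ Q ⊔ Ideal.span (Set.range (Fin.tail b))) +
              (Set.range (Fin.tail b)).encard :=
          ringKrullDim_quotient_le_ringKrullDim_quotient_sup_span_add_encard Q hjacobson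
        _ ≤ (k + n : ℕ∞) := by
          rw [WithBot.coe_add]
          refine add_le_add ((ringKrullDim_quotient_le_of_le hle).trans hJ)
            (WithBot.coe_le_coe.2 ?_)
          simpa [Set.image_univ] using Set.encard_image_le (Fin.tail b) Set.univ
    obtain ⟨q₀, hq₀, hI'⟩ :=
      exists_ringKrullDim_quotient_sup_span_singleton_add_le (by simpa [add_assoc] using hI)
        hminimal
    have hsup : I ⊔ Ideal.span {b 0 + q₀} ⊔ J ⊔ Ideal.span (Set.range (Fin.tail b)) =
        I ⊔ J ⊔ Ideal.span (Set.range b) := by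
      rw [sup_assoc I, span_singleton_add_sup_eq hq₀, span_range_fin_succ b]
      ac_rfl
    obtain ⟨q, hq, hdim⟩ := ih _ (Fin.tail b) (fun i ↦ hb i.succ) (hsup ▸ hJ) hI'
    refine ⟨Fin.cons q₀ q, Fin.cases hq₀ hq, ?_⟩
    rw [span_range_fin_succ, ← sup_assoc]
    exact hdim

end IsNoetherianRing

end CommRing

theorem lifting_sop_general {S : Type*} [CommRing S] [IsLocalRing S] [IsNoetherianRing S]
    (d : ℕ) (hdim : ringKrullDim S ≤ (d : WithBot ℕ∞)) (p : Ideal S) [IsLocalRing (S ⧸ p)]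
    (x : Fin d → S ⧸ p)
    (hx : (Ideal.span (Set.range x)).radical = maximalIdeal (S ⧸ p)) :
    ∃ a : Fin d → S,
      (Ideal.span (Set.range a)).radical = maximalIdeal S ∧
      ∀ i, Ideal.Quotient.mk p (a i) = x i := by
  obtain ⟨b, rfl⟩ : ∃ b : Fin d → S, Ideal.Quotient.mk p ∘ b = x :=
    Ideal.Quotient.mk_surjective.comp_left x
  have := IsLocalHom.of_surjective (Ideal.Quotient.mk p) Ideal.Quotient.mk_surjective
  have mem_of_mk_mem {c : S} (hc : Ideal.Quotient.mk p c ∈ maximalIdeal (S ⧸ p)) :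
      c ∈ maximalIdeal S := by
    rwa [← maximalIdeal_comap (Ideal.Quotient.mk p)]
  have hmk (i : Fin d) : Ideal.Quotient.mk p (b i) ∈ maximalIdeal (S ⧸ p) :=
    hx ▸ Ideal.le_radical (Ideal.subset_span ⟨i, rfl⟩)
  have hdim_lifts : ringKrullDim (S ⧸ p ⊔ Ideal.span (Set.range b)) = 0 := by
    rw [← ringKrullDim_quotient_map_mk, Ideal.map_span, ← Set.range_comp]
    exact ringKrullDim_quotient_eq_zero_iff_radical_eq_maximalIdeal.2 hx
  obtain ⟨q, hq, hdim_add⟩ := exists_ringKrullDim_quotient_sup_span_add_le p 0 ⊥ b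
    (fun i ↦ (ringJacobson_eq_maximalIdeal S).ge (mem_of_mk_mem (hmk i)))
    (by rw [bot_sup_eq]; exact hdim_lifts.le)
    (by simpa using (ringKrullDim_quotient_le ⊥).trans hdim)
  have hmk_add (i : Fin d) :
      Ideal.Quotient.mk p ((b + q) i) = Ideal.Quotient.mk p (b i) := by
    rw [Pi.add_apply, map_add, Ideal.Quotient.eq_zero_iff_mem.2 (hq i), add_zero]
  have hspan : Ideal.span (Set.range (b + q)) ≤ maximalIdeal S :=
    Ideal.span_le.2 (Set.range_subset_iff.2 fun i ↦ mem_of_mk_mem (hmk_add i ▸ hmk i))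
  have : Nontrivial (S ⧸ Ideal.span (Set.range (b + q))) := Ideal.Quotient.nontrivial_iff.2
    (ne_top_of_le_ne_top (maximalIdeal.isMaximal S).ne_top hspan)
  rw [bot_sup_eq] at hdim_add
  exact ⟨b + q, ringKrullDim_quotient_eq_zero_iff_radical_eq_maximalIdeal.1
    (hdim_add.antisymm ringKrullDim_nonneg_of_nontrivial), hmk_add⟩

/-- **Lifting systems of parameters.** Let `(S, 𝔫)` be a Cohen–Macaulay local ring of
dimension `d` with infinite residue field and let `R = S/𝔭`, where `𝔭` is a minimal prime
of `S`. Every system of parameters `x₁, …, x_d` of `R` lifts to a system of parameters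
`a₁, …, a_d` of `S` with `xᵢ = aᵢ + 𝔭`. -/
theorem lifting_sop {S : Type*} [CommRing S] [IsLocalRing S] [IsNoetherianRing S]
    [Infinite (ResidueField S)]
    (hCM : IsCohenMacaulayLocalRing S)
    (d : ℕ) (hdim : ringKrullDim S = (d : WithBot ℕ∞))
    (p : Ideal S) (hp : p ∈ minimalPrimes S)
    [IsLocalRing (S ⧸ p)]
    (x : Fin d → S ⧸ p)
    (hx : (Ideal.span (Set.range x)).radical = maximalIdeal (S ⧸ p)) :
    ∃ a : Fin d → S,
      (Ideal.span (Set.range a)).radical = maximalIdeal S ∧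
      ∀ i, Ideal.Quotient.mk p (a i) = x i :=
  lifting_sop_general d hdim.le p x hx
end

section
/- Let S be a Noetherian ring and L an ideal of S of codimension zero (height 0) without embedded components (i.e., every associated prime of L is a minimal prime of L), and let R = S/L. Then there is an embedding of R into a finitely generated free S-module if and only if L = 0 : (0 : L). -/
/-!
A linear map out of `S ⧸ L` is a vector annihilated by `L`, and it is injective exactly when `L` is
the whole annihilator of that vector. The annihilator of a vector in `Sⁿ` is the annihilator of the
ideal generated by its coordinates, so the ideals `L` with `S ⧸ L` embeddable in some `Sⁿ` are the
annihilators of finitely generated ideals. By the Galois connection of annihilators, `L` is an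
annihilator only if it is its own double annihilator, and then it is the annihilator of the finitely
generated ideal `0 : L`.
-/

section Embedding

variable {S M : Type*} [Ring S] [AddCommGroup M] [Module S M]

theorem torsionOf_map_one {L : Ideal S} {f : (S ⧸ L) →ₗ[S] M} (hf : Function.Injective f) :
    Ideal.torsionOf S M (f (Submodule.Quotient.mk 1)) = L := by
  ext s
  rw [Ideal.mem_torsionOf_iff, ← map_smul, map_eq_zero_iff f hf, ← Submodule.Quotient.mk_smul,
    Submodule.Quotient.mk_eq_zero, smul_eq_mul, mul_one]

theorem exists_injective_quotient_iff_exists_torsionOf_eq (L : Ideal S) :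
    (∃ f : (S ⧸ L) →ₗ[S] M, Function.Injective f) ↔ ∃ x : M, Ideal.torsionOf S M x = L := by
  constructor
  · rintro ⟨f, hf⟩
    exact ⟨_, torsionOf_map_one hf⟩
  · rintro ⟨x, rfl⟩
    exact ⟨(Submodule.span S {x}).subtype ∘ₗ Ideal.quotTorsionOfEquivSpanSingleton S M x,
      Subtype.val_injective.comp (LinearEquiv.injective _)⟩

end Embedding

section Annihilator

variable {S : Type*} [CommSemiring S]

theorem torsionOf_pi_eq_annihilator_span_range {ι M : Type*} [AddCommMonoid M] [Module S M]
    (v : ι → M) :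
    Ideal.torsionOf S (ι → M) v = (Submodule.span S (Set.range v)).annihilator := by
  ext s
  simp [Submodule.mem_annihilator_span, funext_iff]

theorem torsionBySet_eq_annihilator (I : Ideal S) :
    Submodule.torsionBySet S S (I : Set S) = Submodule.annihilator I := by
  ext s
  simp [Submodule.mem_annihilator, mul_comm]

theorem annihilator_annihilator_annihilator (I : Ideal S) :
    Submodule.annihilator (Submodule.annihilator (Submodule.annihilator I)) =
      Submodule.annihilator I := by
  rw [← torsionBySet_eq_annihilator (Submodule.annihilator I)]
  exact (Submodule.torsion_gc S S).l_u_l_eq_l I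

end Annihilator

section FreeModule

variable {S : Type*} [CommRing S]

theorem exists_injective_quotient_fin_iff_exists_fg_annihilator_eq (L : Ideal S) :
    (∃ (n : ℕ) (f : (S ⧸ L) →ₗ[S] (Fin n → S)), Function.Injective f) ↔
      ∃ J : Ideal S, J.FG ∧ Submodule.annihilator J = L := by
  simp only [exists_injective_quotient_iff_exists_torsionOf_eq,
    torsionOf_pi_eq_annihilator_span_range]
  constructor
  · rintro ⟨n, v, hv⟩
    exact ⟨_, Submodule.fg_span (Set.finite_range v), hv⟩
  · rintro ⟨J, hJ, hL⟩
    obtain ⟨n, v, rfl⟩ := Submodule.fg_iff_exists_fin_generating_family.1 hJ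
    exact ⟨n, v, hL⟩

theorem embeds_in_free_iff_double_annihilator_general (L : Ideal S)
    (hfg : (Submodule.annihilator L).FG) :
    (∃ (n : ℕ) (f : (S ⧸ L) →ₗ[S] (Fin n → S)), Function.Injective f) ↔
      L = Submodule.annihilator (Submodule.annihilator L) := by
  rw [exists_injective_quotient_fin_iff_exists_fg_annihilator_eq]
  constructor
  · rintro ⟨J, -, rfl⟩
    exact (annihilator_annihilator_annihilator J).symm
  · intro hL
    exact ⟨Submodule.annihilator L, hfg, hL.symm⟩

end FreeModule

/-- **Proposition 3.6.** Let `S` be a Noetherian ring and `L` an ideal of codimension zero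
(some minimal prime of `S` contains `L`) without embedded components (every associated
prime of `S/L` is a minimal prime of `L`). Then `R = S/L` embeds into a finitely
generated free `S`-module if and only if `L = 0 : (0 : L)`. -/
theorem embeds_in_free_iff_double_annihilator {S : Type*} [CommRing S] [IsNoetherianRing S]
    (L : Ideal S)
    (hht : ∃ p ∈ minimalPrimes S, L ≤ p)
    (hunmixed : ∀ p ∈ associatedPrimes S (S ⧸ L), p ∈ L.minimalPrimes) :
    (∃ (n : ℕ) (f : (S ⧸ L) →ₗ[S] (Fin n → S)), Function.Injective f) ↔
      L = (Submodule.annihilator (Submodule.annihilator L : Ideal S)) :=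
  embeds_in_free_iff_double_annihilator_general L (IsNoetherian.noetherian _)
end

section
/- Let (R, m) be a universally catenary Noetherian local integral domain and let E be a balanced big Cohen–Macaulay R-module. For any set X of indeterminates, let B = R[X]_{m·R[X]} be the localization of the polynomial ring R[X] at the extension of m. Then B ⊗_R E is a balanced big Cohen–Macaulay B-module. -/
open IsLocalRing

/-- A list of prime ideals forming a saturated chain from `p` to `q`. -/
def IsSaturatedPrimeChain (A : Type*) [CommRing A] (p q : Ideal A) (c : List (Ideal A)) :
    Prop :=
  (∀ r ∈ c, r.IsPrime) ∧ c.head? = some p ∧ c.getLast? = some q ∧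
    c.Chain' (fun a b => a < b ∧ ∀ r : Ideal A, r.IsPrime → ¬(a < r ∧ r < b))

/-- A ring is catenary if for every pair of primes `p ≤ q`, all saturated chains of primes
from `p` to `q` have the same length. -/
def IsCatenaryRing (A : Type*) [CommRing A] : Prop :=
  ∀ p q : Ideal A, p.IsPrime → q.IsPrime → p ≤ q →
    ∀ c₁ c₂ : List (Ideal A), IsSaturatedPrimeChain A p q c₁ → IsSaturatedPrimeChain A p q c₂ →
      c₁.length = c₂.length

/-- A ring is universally catenary if every finitely generated algebra over it
(equivalently, every quotient of a polynomial ring in finitely many variables over it)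
is catenary. -/
def IsUniversallyCatenary (A : Type*) [CommRing A] : Prop :=
  ∀ (n : ℕ) (I : Ideal (MvPolynomial (Fin n) A)), IsCatenaryRing (MvPolynomial (Fin n) A ⧸ I)

/-- A system of parameters of a local ring `A`: a list of `dim A` elements generating an
ideal primary to the maximal ideal. -/
def IsSystemOfParameters (A : Type*) [CommRing A] [IsLocalRing A] (rs : List A) : Prop :=
  (Ideal.span {r | r ∈ rs}).radical = maximalIdeal A ∧
    (rs.length : WithBot ℕ∞) = ringKrullDim A

/-- A balanced big Cohen–Macaulay module: `𝔪E ≠ E` and every system of parameters of `A`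
is a regular sequence on `E`. -/
def IsBalancedBigCohenMacaulayModule (A E : Type*) [CommRing A] [IsLocalRing A]
    [AddCommGroup E] [Module A E] : Prop :=
  (maximalIdeal A) • (⊤ : Submodule A E) ≠ ⊤ ∧
    ∀ rs : List A, IsSystemOfParameters A rs → RingTheory.Sequence.IsRegular (R := A) E rs

/-!
A balanced big Cohen–Macaulay `R`-module `E` satisfies `depth E_Q ≥ ht Q` at every prime `Q`, in the
sense that `Q` contains an `E_Q`-regular sequence of length `ht Q`. This property passes to
polynomial rings in finitely many variables. Under it, no prime `Q` with `ht Q > |b|` is associated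
to `M / b M` for an `M`-regular sequence `b`, by vanishing of `Hom` and `Ext` as in Rees' theorem;
hence a sequence `c` is regular as soon as every prime containing `c₁, …, cᵢ` has height at
least `i`.

A system of parameters of `B = R[X]_P` consists, up to units, of polynomials, and these come from a
polynomial subring `S` in finitely many variables, which may be enlarged so that `P ∩ S` has height
at least `dim B`. By going down along the flat map `S → B`, the prime `P ∩ S` is minimal over the
resulting sequence `c` in `S`. As `S` is a catenary domain, every prime of `S_{P ∩ S}` containing
`c₁, …, cᵢ` has height at least `i`, so `c` is regular on `(S ⊗ E)_{P ∩ S}`, and by flatness on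
`B ⊗ E`.
-/

section Grade

open CategoryTheory Abelian RingTheory.Sequence
open scoped Pointwise

universe u v

variable {A : Type u} [CommRing A] [Small.{v} A] {N : ModuleCat.{v} A} {I : Ideal A}

lemma smul_ext_eq_zero_of_mem_annihilator {M : ModuleCat.{v} A} {a : A}
    (ha : a ∈ Module.annihilator A N) {j : ℕ} (e : Ext N M j) : a • e = 0 := by
  have hid : a • 𝟙 N = 0 := by
    ext x
    exact Module.mem_annihilator.1 ha x
  have hcomp : a • e = (Ext.mk₀ (a • 𝟙 N)).comp e (zero_add j) := by
    rw [Ext.mk₀_smul]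
    simp
  rw [hcomp, hid, Ext.mk₀_zero, Ext.zero_comp]

lemma subsingleton_ext_of_isWeaklyRegular (as : List A) (M : ModuleCat.{v} A)
    (has : ∀ a ∈ as, a ∈ Module.annihilator A N) (hM : IsWeaklyRegular M as) (j : ℕ)
    (hj : j < as.length) : Subsingleton (Ext N M j) := by
  induction as generalizing M j with
  | nil => simp at hj
  | cons a as ih =>
    rw [isWeaklyRegular_cons_iff] at hM
    have hS := hM.1.smulShortComplex_shortExact (M := M)
    refine subsingleton_of_forall_eq 0 fun e => ?_
    have hsmul : e.comp (Ext.mk₀ (M.smulShortComplex a).f) (add_zero j) = 0 := by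
      have hid : e.comp (Ext.mk₀ (a • 𝟙 M)) (add_zero j) = 0 := by
        rw [Ext.mk₀_smul]
        simpa using smul_ext_eq_zero_of_mem_annihilator (has a (by simp)) e
      exact hid
    cases j with
    | zero =>
      have := hS.mono_f
      exact (injective_iff_map_eq_zero _).1
        (Ext.postcomp_mk₀_injective_of_mono N (M.smulShortComplex a).f) e hsmul
    | succ j =>
      obtain ⟨e', rfl⟩ := Ext.covariant_sequence_exact₁ N hS e hsmul rfl
      have := ih (M.smulShortComplex a).X₃ (fun b hb => has b (by simp [hb])) hM.2 j
        (by simpa using hj)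
      rw [Subsingleton.elim e' 0, Ext.zero_comp]
      rfl

lemma subsingleton_linearMap_quotient_ofList_smul_top (bs : List A) (M : ModuleCat.{v} A)
    (hM : IsWeaklyRegular M bs) (hExt : ∀ j ≤ bs.length, Subsingleton (Ext N M j)) :
    Subsingleton (N →ₗ[A] M ⧸ (Ideal.ofList bs • ⊤ : Submodule A M)) := by
  induction bs generalizing M with
  | nil =>
    have := hExt 0 le_rfl
    have : Subsingleton (N ⟶ M) := (Ext.mk₀_bijective N M).injective.subsingleton
    have e : (M ⧸ (Ideal.ofList ([] : List A) • ⊤ : Submodule A M)) ≃ₗ[A] M :=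
      Submodule.quotEquivOfEqBot _ (by simp)
    exact (e.congrRight.toEquiv.trans ModuleCat.homEquiv.symm).subsingleton
  | cons b bs ih =>
    rw [isWeaklyRegular_cons_iff] at hM
    have hS := hM.1.smulShortComplex_shortExact (M := M)
    have hquot : Subsingleton (N →ₗ[A] QuotSMulTop b M ⧸ (Ideal.ofList bs • ⊤ :
        Submodule A (QuotSMulTop b M))) := by
      refine ih (M.smulShortComplex b).X₃ hM.2 fun j hj => subsingleton_of_forall_eq 0 fun e => ?_
      have hsucc := hExt (j + 1) (by simpa using hj)
      obtain ⟨e', rfl⟩ := Ext.covariant_sequence_exact₃ N hS e rfl (hsucc.elim _ _)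
      obtain rfl : e' = 0 := (hExt j (hj.trans (by simp))).elim _ _
      exact Ext.zero_comp N j (Ext.mk₀ (M.smulShortComplex b).g) j (add_zero j)
    have e := Submodule.quotOfListConsSMulTopEquivQuotSMulTopInner M b bs
    exact (e.congrRight (M := N)).toEquiv.subsingleton

-- `Ext N M j` vanishes below the length of an `M`-regular sequence in the annihilator of `N`, while
-- dimension shifting along `bs` turns a homomorphism `N → M / bs M` into a class of degree `|bs|`.
theorem torsionBySet_quotient_ofList_smul_top_eq_bot {M : Type v} [AddCommGroup M] [Module A M]
    {as bs : List A} (hasI : ∀ a ∈ as, a ∈ I) (has : IsWeaklyRegular M as)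
    (hbs : IsWeaklyRegular M bs) (hlen : bs.length < as.length) :
    Submodule.torsionBySet A (M ⧸ (Ideal.ofList bs • ⊤ : Submodule A M)) I = ⊥ := by
  set T := Submodule.torsionBySet A (M ⧸ (Ideal.ofList bs • ⊤ : Submodule A M)) I
  have hT : ∀ a ∈ as, a ∈ Module.annihilator A T := fun a ha =>
    Module.mem_annihilator.2 fun x =>
      Subtype.ext ((Submodule.mem_torsionBySet_iff _ _).1 x.2 ⟨a, hasI a ha⟩)
  have := subsingleton_linearMap_quotient_ofList_smul_top (N := ModuleCat.of A T) bs
    (ModuleCat.of A M) hbs fun j hj =>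
      subsingleton_ext_of_isWeaklyRegular as _ hT has j (hj.trans_lt hlen)
  have hsub : T.subtype = 0 := this.elim _ _
  rw [← T.range_subtype, hsub, LinearMap.range_zero]

end Grade

section LocalizedBaseChange

open RingTheory.Sequence

variable {A D M N : Type*} [CommRing A] [CommRing D] [Algebra A D] [AddCommGroup M] [Module A M]
  [AddCommGroup N] [Module A N] [Module D N] [IsScalarTower A D N]

lemma isUnit_algebraMap_end_of_isUnit_algebraMap {Q : Type*} [AddCommMonoid Q] [Module A Q]
    [Module D Q] [IsScalarTower A D Q] {a : A} (ha : IsUnit (algebraMap A D a)) :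
    IsUnit (algebraMap A (Module.End A Q) a) := by
  have h := ha.map (Algebra.lsmul A A Q : D →ₐ[A] Module.End A Q)
  rwa [AlgHom.commutes] at h

lemma exists_isBaseChange_localizedModule {g : M →ₗ[A] N} (hg : IsBaseChange D g)
    (S : Submonoid A) (hS : ∀ s : S, IsUnit (algebraMap A D s)) :
    ∃ g' : LocalizedModule S M →ₗ[A] N, IsBaseChange D g' := by
  have hunit (s : S) : IsUnit (algebraMap A (Module.End A N) s) :=
    isUnit_algebraMap_end_of_isUnit_algebraMap (hS s)
  refine ⟨LocalizedModule.lift S g hunit, IsBaseChange.of_lift_unique _ ?_⟩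
  intro Q _ _ _ _ h
  have hunitQ (s : S) : IsUnit (algebraMap A (Module.End A Q) s) :=
    isUnit_algebraMap_end_of_isUnit_algebraMap (hS s)
  refine ⟨hg.lift (h ∘ₗ LocalizedModule.mkLinearMap S M), ?_, fun k hk => ?_⟩
  · refine IsLocalizedModule.ext S (LocalizedModule.mkLinearMap S M) hunitQ ?_
    rw [LinearMap.comp_assoc, LocalizedModule.lift_comp, hg.lift_comp]
  · refine hg.algHom_ext' _ _ ?_
    rw [hg.lift_comp, ← hk, LinearMap.comp_assoc, LocalizedModule.lift_comp]

lemma isWeaklyRegular_of_isWeaklyRegular_tensorProduct {B : Type*} [CommRing B] [Algebra A B]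
    [Algebra B D] [IsScalarTower A B D] [Module.Flat B D] [Module B N] [IsScalarTower A B N]
    [IsScalarTower B D N] {g : M →ₗ[A] N} (hg : IsBaseChange D g) {rs : List B}
    (hrs : IsWeaklyRegular (TensorProduct A B M) rs) : IsWeaklyRegular N rs := by
  have hBM := TensorProduct.isBaseChange A M B
  have hlift : IsBaseChange D (hBM.lift g) := by
    refine IsBaseChange.of_comp hBM ?_
    rwa [hBM.lift_comp]
  exact (isWeaklyRegular_map_algebraMap_iff D N rs).1 (hrs.of_flat_of_isBaseChange hlift)

lemma isWeaklyRegular_of_isWeaklyRegular_localizedModule [Module.Flat A D] {g : M →ₗ[A] N}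
    (hg : IsBaseChange D g) (S : Submonoid A) (hS : ∀ s : S, IsUnit (algebraMap A D s))
    {rs : List A} (hrs : IsWeaklyRegular (LocalizedModule S M) rs) : IsWeaklyRegular N rs := by
  obtain ⟨g', hg'⟩ := exists_isBaseChange_localizedModule hg S hS
  exact (isWeaklyRegular_map_algebraMap_iff D N rs).1 (hrs.of_flat_of_isBaseChange hg')

lemma isWeaklyRegular_append_singleton_of_isUnit {rs : List A} (hrs : IsWeaklyRegular N rs) {a : A}
    (ha : IsUnit (algebraMap A D a)) : IsWeaklyRegular N (rs ++ [a]) := by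
  rw [← isWeaklyRegular_map_algebraMap_iff D N] at hrs ⊢
  rw [List.map_append, isWeaklyRegular_append_iff]
  exact ⟨hrs, (isWeaklyRegular_singleton_iff _ _).2 (ha.isSMulRegular _)⟩

end LocalizedBaseChange

section Depth

open RingTheory.Sequence TensorProduct

variable {A C M N : Type*} [CommRing A] [CommRing C] [Algebra A C] [AddCommGroup M] [Module A M]
  [AddCommGroup N] [Module A N] [Module C N] [IsScalarTower A C N]

/-- The inequality `depth M_P ≥ ht P`, for a module that need not be finitely generated: it is
witnessed by a weakly `M_P`-regular sequence of elements of `P`. -/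
def HasDepthGEHeightAt (M : Type*) [AddCommGroup M] [Module A M] (P : Ideal A) [P.IsPrime] : Prop :=
  ∃ rs : List A, (∀ r ∈ rs, r ∈ P) ∧ P.height ≤ rs.length ∧
    IsWeaklyRegular (LocalizedModule P.primeCompl M) rs

/-- The inequality `depth M_P ≥ ht P` at every prime ideal `P` of `A`. For finitely generated
modules of full support this says that `M` is Cohen–Macaulay. -/
def HasDepthGEHeight (A M : Type*) [CommRing A] [AddCommGroup M] [Module A M] : Prop :=
  ∀ (P : Ideal A) [P.IsPrime], HasDepthGEHeightAt M P

lemma isUnit_algebraMap_localization_atPrime (P : Ideal C) [P.IsPrime]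
    (s : (P.under A).primeCompl) : IsUnit (algebraMap A (Localization.AtPrime P) s) := by
  rw [IsScalarTower.algebraMap_apply A C]
  exact IsLocalization.map_units _ (⟨algebraMap A C s, s.2⟩ : P.primeCompl)

lemma exists_isBaseChange_localization_atPrime {g : M →ₗ[A] N} (hg : IsBaseChange C g)
    (P : Ideal C) [P.IsPrime] :
    ∃ g' : M →ₗ[A] LocalizedModule P.primeCompl N, IsBaseChange (Localization.AtPrime P) g' :=
  ⟨_, hg.comp (IsLocalizedModule.isBaseChange P.primeCompl (Localization.AtPrime P)
    (LocalizedModule.mkLinearMap P.primeCompl N))⟩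

lemma HasDepthGEHeightAt.of_flat [Module.Flat A C] {g : M →ₗ[A] N} (hg : IsBaseChange C g)
    {P : Ideal C} [P.IsPrime] (hP : P.height ≤ (P.under A).height)
    (hM : HasDepthGEHeightAt M (P.under A)) : HasDepthGEHeightAt N P := by
  obtain ⟨rs, hrs, hlen, hreg⟩ := hM
  have : Module.Flat A (Localization.AtPrime P) := .trans A C _
  obtain ⟨g', hg'⟩ := exists_isBaseChange_localization_atPrime hg P
  have hreg' := isWeaklyRegular_of_isWeaklyRegular_localizedModule hg' _
    (isUnit_algebraMap_localization_atPrime P) hreg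
  refine ⟨rs.map (algebraMap A C), ?_, by simpa using hP.trans hlen, ?_⟩
  · simpa [Ideal.mem_comap] using hrs
  · exact (isWeaklyRegular_map_algebraMap_iff C _ rs).2 hreg'

lemma HasDepthGEHeight.of_bijective (hbij : Function.Bijective (algebraMap A C)) {g : M →ₗ[A] N}
    (hg : IsBaseChange C g) (hM : HasDepthGEHeight A M) : HasDepthGEHeight C N := by
  have : Module.Flat A C :=
    .of_linearEquiv (LinearEquiv.ofBijective (Algebra.linearMap A C) hbij).symm
  exact fun P _ => (hM (P.under A)).of_flat hg
    (RingEquiv.height_comap (RingEquiv.ofBijective _ hbij) P).ge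

end Depth

section Polynomial

open RingTheory.Sequence TensorProduct Polynomial

variable {A M N : Type*} [CommRing A] [AddCommGroup M] [Module A M]
  [AddCommGroup N] [Module A N] [Module A[X] N] [IsScalarTower A A[X] N]

lemma isSMulRegular_tensorProduct_of_leadingCoeff {f : A[X]}
    (hf : IsSMulRegular M f.leadingCoeff) : IsSMulRegular (A[X] ⊗[A] M) f := by
  rw [LinearEquiv.isSMulRegular_congr
    (PolynomialModule.polynomialTensorProductLEquivPolynomialModule A M),
    isSMulRegular_iff_right_eq_zero_of_smul]
  intro g hg
  by_contra hne
  have hsupp : g.coeff.support.Nonempty := Finsupp.support_nonempty_iff.2 fun h =>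
    hne ((PolynomialModule.coeffEquiv A).injective h)
  set d := g.coeff.support.max' hsupp with hd
  have htop : g.coeff d ≠ 0 := Finsupp.mem_support_iff.1 (Finset.max'_mem _ _)
  have hgt (j : ℕ) (hj : d < j) : g.coeff j = 0 :=
    Finsupp.notMem_support_iff.1 fun h => (Finset.le_max' _ j h).not_gt hj
  have hcoeff : (f • g).coeff (f.natDegree + d) = f.leadingCoeff • g.coeff d := by
    rw [PolynomialModule.smul_apply, Finset.sum_eq_single (f.natDegree, d) _ (by simp)]
    · rfl
    rintro ⟨i, j⟩ hij hne'
    rw [Finset.HasAntidiagonal.mem_antidiagonal] at hij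
    rcases lt_trichotomy j d with hj | rfl | hj
    · rw [coeff_eq_zero_of_natDegree_lt (by lia), zero_smul]
    · simp_all
    · rw [hgt j hj, smul_zero]
  rw [hg] at hcoeff
  exact htop (isSMulRegular_iff_right_eq_zero_of_smul.1 hf _ hcoeff.symm)

lemma isWeaklyRegular_tensorProduct_map_C_append (rs : List A) (f : A[X])
    (h : IsWeaklyRegular M (rs ++ [f.leadingCoeff])) :
    IsWeaklyRegular (A[X] ⊗[A] M) (rs.map (algebraMap A A[X]) ++ [f]) := by
  induction rs generalizing M with
  | nil =>
    simp only [List.map_nil, List.nil_append, isWeaklyRegular_singleton_iff] at h ⊢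
    exact isSMulRegular_tensorProduct_of_leadingCoeff h
  | cons a rs ih =>
    rw [List.cons_append, isWeaklyRegular_cons_iff] at h
    rw [List.map_cons, List.cons_append, isWeaklyRegular_cons_iff,
      (QuotSMulTop.algebraMapTensorEquivTensorQuotSMulTop a M A[X]).isWeaklyRegular_congr]
    exact ⟨h.1.of_flat_of_isBaseChange (TensorProduct.isBaseChange A M A[X]), ih h.2⟩

lemma le_map_C_comap_of_leadingCoeff_le {P : Ideal A[X]} (h : P.leadingCoeff ≤ P.comap C) :
    P ≤ (P.comap C).map C := by
  intro f hf
  induction hn : f.degree using WellFoundedLT.induction generalizing f with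
  | ind n ih =>
    by_cases hf0 : f = 0
    · exact hf0 ▸ zero_mem _
    have hlead : f.leadingCoeff ∈ P.comap C := h (Ideal.mem_leadingCoeff P _ |>.2 ⟨f, hf, rfl⟩)
    have herase : f.eraseLead ∈ P := by
      rw [← self_sub_C_mul_X_pow]
      exact P.sub_mem hf (P.mul_mem_right _ hlead)
    rw [← f.eraseLead_add_C_mul_X_pow]
    exact add_mem (ih _ (hn ▸ degree_eraseLead_lt hf0) herase rfl)
      (Ideal.mul_mem_right _ _ (Ideal.mem_map_of_mem C hlead))

attribute [local instance] Polynomial.algebra Polynomial.isLocalization in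
lemma height_le_height_comap_C_add_one [IsNoetherianRing A] (P : Ideal A[X]) [P.IsPrime] :
    P.height ≤ (P.comap C).height + 1 := by
  set p := P.comap C
  let Ap := Localization.AtPrime p
  have hdisj : Disjoint (p.primeCompl.map C : Set A[X]) (P : Set A[X]) :=
    Set.disjoint_left.2 <| by
      rintro _ ⟨x, hx, rfl⟩ hxP
      exact hx hxP
  have hprime : (P.map (algebraMap A[X] Ap[X])).IsPrime :=
    IsLocalization.isPrime_of_isPrime_disjoint (p.primeCompl.map C) _ P inferInstance hdisj
  have hdim := Ideal.height_le_ringKrullDim_of_ne_top hprime.ne_top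
  rw [ringKrullDim_of_isNoetherianRing, IsLocalization.AtPrime.ringKrullDim_eq_height p Ap,
    IsLocalization.height_map_of_disjoint (p.primeCompl.map C) P hdisj] at hdim
  exact_mod_cast hdim

lemma map_C_lt_comap_constantCoeff {p : Ideal A} (hp : p ≠ ⊤) :
    p.map C < p.comap (constantCoeff : A[X] →+* A) := by
  refine lt_of_le_of_ne (Ideal.map_le_iff_le_comap.2 fun x hx => by simpa using hx) fun h => ?_
  have hX : (X : A[X]) ∈ p.map C := h ▸ by simp
  exact hp ((Ideal.eq_top_iff_one p).2 (by simpa using Ideal.mem_map_C_iff.1 hX 1))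

lemma height_map_C_le [IsNoetherianRing A] (p : Ideal A) [p.IsPrime] :
    (p.map (C : A →+* A[X])).height ≤ p.height := by
  have := Ideal.isPrime_map_C_of_isPrime (P := p)
  have hcomap : (p.comap (constantCoeff : A[X] →+* A)).comap C = p := by
    ext x
    simp
  have h := (Ideal.height_add_one_le_of_lt_of_isPrime (map_C_lt_comap_constantCoeff
    (Ideal.IsPrime.ne_top ‹p.IsPrime›))).trans (height_le_height_comap_C_add_one _)
  rw [hcomap] at h
  exact (ENat.add_le_add_iff_right ENat.one_ne_top).1 h

lemma HasDepthGEHeightAt.polynomial_of_leadingCoeff_notMem [IsNoetherianRing A] {g : M →ₗ[A] N}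
    (hg : IsBaseChange A[X] g) {P : Ideal A[X]} [P.IsPrime] {f : A[X]} (hf : f ∈ P)
    (hlead : f.leadingCoeff ∉ P.under A) (hM : HasDepthGEHeightAt M (P.under A)) :
    HasDepthGEHeightAt N P := by
  obtain ⟨rs, hrs, hlen, hreg⟩ := hM
  obtain ⟨g', hg'⟩ := exists_isBaseChange_localization_atPrime hg P
  obtain ⟨g'', hg''⟩ := exists_isBaseChange_localizedModule hg' _
    (isUnit_algebraMap_localization_atPrime P)
  refine ⟨rs.map (algebraMap A A[X]) ++ [f], ?_, ?_, ?_⟩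
  · simpa [or_imp, forall_and, hf, Ideal.mem_comap] using hrs
  · refine (height_le_height_comap_C_add_one P).trans ?_
    simpa using! hlen
  · refine isWeaklyRegular_of_isWeaklyRegular_tensorProduct hg''
      (isWeaklyRegular_tensorProduct_map_C_append rs f ?_)
    exact isWeaklyRegular_append_singleton_of_isUnit (D := Localization.AtPrime (P.under A)) hreg
      (IsLocalization.map_units _ (⟨f.leadingCoeff, hlead⟩ : (P.under A).primeCompl))

theorem HasDepthGEHeight.polynomial [IsNoetherianRing A] {g : M →ₗ[A] N}
    (hg : IsBaseChange A[X] g) (hM : HasDepthGEHeight A M) : HasDepthGEHeight A[X] N := by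
  intro P _
  by_cases h : P.leadingCoeff ≤ P.comap C
  · have hP : P = (P.under A).map C :=
      (le_map_C_comap_of_leadingCoeff_le h).antisymm Ideal.map_comap_le
    refine (hM _).of_flat hg ?_
    conv_lhs => rw [hP]
    exact height_map_C_le _
  · obtain ⟨a, ha, hlead⟩ := SetLike.not_le_iff_exists.1 h
    obtain ⟨f, hf, rfl⟩ := (Ideal.mem_leadingCoeff P a).1 ha
    exact (hM _).polynomial_of_leadingCoeff_notMem hg hf hlead

lemma isBaseChange_map_linearMap_id {R B C E : Type*} [CommRing R] [CommRing B] [CommRing C]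
    [Algebra R B] [Algebra R C] [Algebra B C] [IsScalarTower R B C] [AddCommGroup E] [Module R E] :
    IsBaseChange C (AlgebraTensorModule.map (Algebra.linearMap B C) LinearMap.id :
      B ⊗[R] E →ₗ[B] C ⊗[R] E) := by
  refine IsBaseChange.of_comp (TensorProduct.isBaseChange R E B) ?_
  convert TensorProduct.isBaseChange R E C
  ext x
  simp

lemma HasDepthGEHeight.of_algEquiv {R B C E : Type*} [CommRing R] [CommRing B] [CommRing C]
    [Algebra R B] [Algebra R C] [AddCommGroup E] [Module R E] (e : B ≃ₐ[R] C)
    (hB : HasDepthGEHeight B (B ⊗[R] E)) : HasDepthGEHeight C (C ⊗[R] E) := by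
  let _ : Algebra B C := e.toRingHom.toAlgebra
  have : IsScalarTower R B C := .of_algebraMap_eq fun r => (e.commutes r).symm
  exact hB.of_bijective e.bijective isBaseChange_map_linearMap_id

theorem HasDepthGEHeight.mvPolynomial {R E : Type*} [CommRing R] [IsNoetherianRing R]
    [AddCommGroup E] [Module R E] (hE : HasDepthGEHeight R E) (n : ℕ) :
    HasDepthGEHeight (MvPolynomial (Fin n) R) (MvPolynomial (Fin n) R ⊗[R] E) := by
  induction n with
  | zero =>
    exact hE.of_bijective (MvPolynomial.isEmptyAlgEquiv R (Fin 0)).symm.bijective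
      (TensorProduct.isBaseChange R E _)
  | succ n ih =>
    exact (ih.polynomial isBaseChange_map_linearMap_id).of_algEquiv
      (MvPolynomial.finSuccEquiv R n).symm

end Polynomial

section HeightCriterion

open RingTheory.Sequence

variable {A M : Type*} [CommRing A] [AddCommGroup M] [Module A M]

lemma exists_smul_mem_smul_top_of_mkLinearMap_mem (S : Submonoid A) (I : Ideal A) {w : M}
    (hw : LocalizedModule.mkLinearMap S M w ∈ (I • ⊤ : Submodule A (LocalizedModule S M))) :
    ∃ s ∈ S, s • w ∈ (I • ⊤ : Submodule A M) := by
  rw [← Submodule.localized₀_top S (LocalizedModule.mkLinearMap S M),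
    ← Submodule.localized₀_smul] at hw
  obtain ⟨m, hm, s, hs⟩ := hw
  rw [IsLocalizedModule.mk'_eq_iff, Submonoid.smul_def, ← map_smul,
    IsLocalizedModule.eq_iff_exists S] at hs
  obtain ⟨t, ht⟩ := hs
  refine ⟨t * s, (t * s).2, ?_⟩
  rw [mul_smul, ← Submonoid.smul_def t, ← ht]
  exact Submodule.smul_mem _ _ hm

variable [IsNoetherianRing A]

lemma height_le_length_of_isAssociatedPrime {Q : Ideal A} [Q.IsPrime] (hM : HasDepthGEHeightAt M Q)
    {bs : List A} (hbs : IsWeaklyRegular M bs)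
    (hQ : IsAssociatedPrime Q (M ⧸ (Ideal.ofList bs • ⊤ : Submodule A M))) :
    Q.height ≤ bs.length := by
  by_contra! hlt
  obtain ⟨as, has, hlen, hreg⟩ := hM
  obtain ⟨-, w, hw⟩ := isAssociatedPrime_iff.1 hQ
  obtain ⟨w, rfl⟩ := Submodule.Quotient.mk_surjective _ w
  have hmem (a : A) : a ∈ Q ↔ a • w ∈ (Ideal.ofList bs • ⊤ : Submodule A M) := by
    rw [hw, Submodule.mem_colon_singleton, Submodule.mem_bot, ← Submodule.Quotient.mk_smul,
      Submodule.Quotient.mk_eq_zero]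
  let f := LocalizedModule.mkLinearMap Q.primeCompl M
  have hbs' : IsWeaklyRegular (LocalizedModule Q.primeCompl M) bs :=
    (isWeaklyRegular_map_algebraMap_iff (Localization.AtPrime Q) _ bs).1
      (hbs.of_flat_of_isBaseChange
        (IsLocalizedModule.isBaseChange Q.primeCompl (Localization.AtPrime Q) f))
  have htorsion : Submodule.Quotient.mk (f w) ∈ Submodule.torsionBySet A
      (LocalizedModule Q.primeCompl M ⧸ (Ideal.ofList bs • ⊤ : Submodule A _)) Q := by
    rw [Submodule.mem_torsionBySet_iff]
    rintro ⟨a, ha⟩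
    rw [← Submodule.Quotient.mk_smul, Submodule.Quotient.mk_eq_zero, ← map_smul]
    have := Submodule.mem_map_of_mem (f := f) ((hmem a).1 ha)
    rw [Submodule.map_smul''] at this
    exact Submodule.smul_mono le_rfl le_top this
  rw [torsionBySet_quotient_ofList_smul_top_eq_bot has hreg hbs'
    (by exact_mod_cast hlt.trans_le hlen), Submodule.mem_bot,
    Submodule.Quotient.mk_eq_zero] at htorsion
  obtain ⟨s, hs, hsw⟩ := exists_smul_mem_smul_top_of_mkLinearMap_mem _ _ htorsion
  exact hs ((hmem s).2 hsw)

theorem isWeaklyRegular_of_forall_le_height (hM : HasDepthGEHeight A M) {cs : List A}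
    (hcs : ∀ i ≤ cs.length, ∀ Q : Ideal A, Q.IsPrime → Ideal.ofList (cs.take i) ≤ Q →
      (i : ℕ∞) ≤ Q.height) : IsWeaklyRegular M cs := by
  suffices h : ∀ i ≤ cs.length, IsWeaklyRegular M (cs.take i) by
    simpa using h cs.length le_rfl
  intro i
  induction i with
  | zero => simp
  | succ i ih =>
    intro hi
    have hreg := ih (Nat.le_of_succ_le hi)
    have htake : cs.take (i + 1) = cs.take i ++ [cs[i]] := by
      rw [List.take_add_one, List.getElem?_eq_getElem hi, Option.toList_some]
    rw [htake, isWeaklyRegular_append_iff, isWeaklyRegular_singleton_iff,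
      isSMulRegular_iff_right_eq_zero_of_smul]
    refine ⟨hreg, fun z hz => ?_⟩
    by_contra hz0
    obtain ⟨Q, hQ, hle⟩ := exists_le_isAssociatedPrime_of_isNoetherianRing A z hz0
    have hQp : Q.IsPrime := hQ.isPrime
    have hheight := height_le_length_of_isAssociatedPrime (hM Q) hreg hQ
    have hann : Ideal.ofList (cs.take i) ≤ Q := by
      refine le_trans (fun a ha => ?_) hQ.annihilator_le
      rw [Submodule.annihilator_top, Submodule.annihilator_quotient, Submodule.mem_colon]
      exact fun x _ => Submodule.smul_mem_smul ha trivial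
    have hsucc := hcs (i + 1) hi Q hQp (by
      rw [htake, Ideal.ofList_append, Ideal.ofList_singleton, sup_le_iff,
        Ideal.span_singleton_le_iff_mem]
      exact ⟨hann, hle (by simpa [Submodule.mem_colon_singleton] using hz)⟩)
    have := hsucc.trans hheight
    rw [List.length_take] at this
    norm_cast at this
    lia

end HeightCriterion

section SystemOfParameters

open RingTheory.Sequence

variable {A : Type*} [CommRing A]

lemma height_add_ringKrullDim_quotient_le (J : Ideal A) :
    J.height + ringKrullDim (A ⧸ J) ≤ ringKrullDim A := by
  rw [ringKrullDim_quotient]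
  cases isEmpty_or_nonempty (PrimeSpectrum.zeroLocus (J : Set A)) with
  | inl h => rw [Order.krullDim_eq_bot, WithBot.add_bot]; exact bot_le
  | inr h =>
    have : Nonempty (PrimeSpectrum A) := h.map (↑)
    rw [ringKrullDim, Order.krullDim_eq_iSup_coheight_of_nonempty,
      Order.krullDim_eq_iSup_height_add_coheight_of_nonempty, ← WithBot.coe_add,
      WithBot.coe_le_coe, ENat.add_iSup]
    refine iSup_le fun P => le_trans ?_ (le_iSup _ (P : PrimeSpectrum A))
    rw [← PrimeSpectrum.height_eq_orderHeight]
    exact add_le_add (Ideal.height_mono P.2)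
      (Order.coheight_le_coheight_apply_of_strictMono _ (Subtype.strictMono_coe _) P)

variable [IsNoetherianRing A]

lemma exists_ofList_le_and_height_eq_length (p : Ideal A) (hp : p ≠ ⊤) :
    ∃ xs : List A, Ideal.ofList xs ≤ p ∧ (Ideal.ofList xs).height = xs.length ∧
      p.height = xs.length := by
  obtain ⟨J, hJ, hrank, hheight⟩ := p.exists_spanRank_eq_and_height_eq hp
  obtain ⟨s, hs, rfl⟩ := Submodule.exists_span_set_card_eq_spanRank J
  obtain ⟨n, hn⟩ := ENat.ne_top_iff_exists.1 (Ideal.height_ne_top hp)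
  rw [← hn] at hrank hheight ⊢
  have hfin : s.Finite := by
    rw [← Cardinal.lt_aleph0_iff_set_finite, hs, hrank]
    exact Cardinal.natCast_lt_aleph0
  lift s to Finset A using hfin
  have hlist : Ideal.ofList s.toList = Ideal.span s := by
    simp [Ideal.ofList]
  have hcard : s.card = n := by
    simpa using hs.trans hrank
  refine ⟨s.toList, hlist ▸ hJ, ?_, ?_⟩
  · rw [hlist, Finset.length_toList, hcard]
    exact hheight
  · rw [Finset.length_toList, hcard]

lemma height_le_length_of_mem_minimalPrimes_ofList {rs : List A} {p : Ideal A}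
    (hp : p ∈ (Ideal.ofList rs).minimalPrimes) : p.height ≤ rs.length := by
  classical
  have hspan : Ideal.ofList rs = Ideal.span (rs.toFinset : Set A) := by
    rw [List.coe_toFinset, Ideal.ofList]
  exact (Ideal.height_le_card_of_mem_minimalPrimes_span_finset (hspan ▸ hp)).trans
    (Nat.cast_le.2 rs.toFinset_card_le)

variable [IsLocalRing A]

lemma ringKrullDim_le_length_of_radical_ofList_eq {rs : List A}
    (hrs : (Ideal.ofList rs).radical = maximalIdeal A) : ringKrullDim A ≤ rs.length := by
  have hmem : maximalIdeal A ∈ (Ideal.ofList rs).minimalPrimes := by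
    rw [← Ideal.radical_minimalPrimes, hrs, Ideal.minimalPrimes_eq_subsingleton_self]
    rfl
  rw [← maximalIdeal_height_eq_ringKrullDim]
  exact_mod_cast height_le_length_of_mem_minimalPrimes_ofList hmem

variable (A) in
lemma exists_isSystemOfParameters : ∃ rs : List A, IsSystemOfParameters A rs := by
  obtain ⟨s, hs, hcard⟩ :=
    Ideal.exists_finset_card_eq_height_of_isNoetherianRing (maximalIdeal A)
  refine ⟨s.toList, ?_, ?_⟩
  · have hspan : {r | r ∈ s.toList} = (s : Set A) := by
      ext
      simp
    rw [hspan, Ideal.radical_eq_sInf]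
    refine le_antisymm (sInf_le ⟨hs.1.2, inferInstance⟩) (le_sInf fun Q hQ => ?_)
    exact hs.2 ⟨hQ.2, hQ.1⟩ (le_maximalIdeal hQ.2.ne_top)
  · rw [← maximalIdeal_height_eq_ringKrullDim, ← hcard, Finset.length_toList]
    rfl

lemma exists_isSystemOfParameters_append {xs : List A} (hne : Ideal.ofList xs ≠ ⊤)
    (hxs : (Ideal.ofList xs).height = xs.length) :
    ∃ ys, IsSystemOfParameters A (xs ++ ys) := by
  set J := Ideal.ofList xs
  have : Nontrivial (A ⧸ J) := Ideal.Quotient.nontrivial_iff.2 hne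
  have : IsLocalRing (A ⧸ J) := .of_surjective' _ Ideal.Quotient.mk_surjective
  have : IsLocalHom (Ideal.Quotient.mk J) := .of_surjective _ Ideal.Quotient.mk_surjective
  obtain ⟨zs, hzs, hlen⟩ := exists_isSystemOfParameters (A ⧸ J)
  obtain ⟨ys, rfl⟩ := List.map_surjective_iff.2 Ideal.Quotient.mk_surjective zs
  have hrad : (Ideal.ofList (xs ++ ys)).radical = maximalIdeal A := by
    have hcomap : (Ideal.ofList (ys.map (Ideal.Quotient.mk J))).comap (Ideal.Quotient.mk J) =
        Ideal.ofList (xs ++ ys) := by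
      rw [← Ideal.map_ofList, Ideal.comap_map_of_surjective' _ Ideal.Quotient.mk_surjective,
        Ideal.mk_ker, Ideal.ofList_append, sup_comm]
    rw [← hcomap, ← Ideal.comap_radical, ← maximalIdeal_comap (Ideal.Quotient.mk J), ← hzs]
  refine ⟨ys, hrad, le_antisymm ?_ (ringKrullDim_le_length_of_radical_ofList_eq hrad)⟩
  refine le_trans ?_ (height_add_ringKrullDim_quotient_le J)
  rw [hxs, ← hlen]
  simp

theorem HasDepthGEHeight.of_isBalancedBigCohenMacaulayModule {E : Type*} [AddCommGroup E]
    [Module A E] (hE : IsBalancedBigCohenMacaulayModule A E) : HasDepthGEHeight A E := by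
  intro p hp
  obtain ⟨xs, hxs, hheight, hlen⟩ := exists_ofList_le_and_height_eq_length p hp.ne_top
  obtain ⟨ys, hys⟩ := exists_isSystemOfParameters_append
    (ne_top_of_le_ne_top hp.ne_top hxs) hheight
  have hreg := ((isWeaklyRegular_append_iff _ _ _).1 (hE.2 _ hys).toIsWeaklyRegular).1
  exact ⟨xs, fun r hr => hxs (Ideal.subset_span hr), hlen.le,
    (isWeaklyRegular_map_algebraMap_iff (Localization.AtPrime p) _ xs).1
      (hreg.of_flat_of_isBaseChange (IsLocalizedModule.isBaseChange p.primeCompl _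
        (LocalizedModule.mkLinearMap p.primeCompl E)))⟩

end SystemOfParameters

section Catenary

variable {α β : Type*} [PartialOrder α] [PartialOrder β]

/-- The Jordan–Dedekind chain condition: any two saturated chains with the same endpoints have the
same length. A ring is catenary when its prime spectrum satisfies this condition. -/
def IsCatenaryOrder (α : Type*) [PartialOrder α] : Prop :=
  ∀ s t : RelSeries {(a, b) : α × α | a ⋖ b}, s.head = t.head → s.last = t.last →
    s.length = t.length

lemma IsCatenaryOrder.of_orderIso (hα : IsCatenaryOrder α) (e : α ≃o β) : IsCatenaryOrder β := by
  intro s t hhead hlast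
  let f : SetRel.Hom {(a, b) : β × β | a ⋖ b} {(a, b) : α × α | a ⋖ b} :=
    ⟨e.symm, fun h => (apply_covBy_apply_iff e.symm).2 h⟩
  exact hα (s.map f) (t.map f) (by simp [hhead]) (by simp [hlast])

lemma exists_covBy_relSeries_of_le [WellFoundedLT α] [WellFoundedGT α] {a b : α} (hab : a ≤ b) :
    ∃ s : RelSeries {(a, b) : α × α | a ⋖ b}, s.head = a ∧ s.last = b := by
  obtain ⟨f, rfl, n, rfl, hf⟩ := exists_covBy_seq_of_wellFoundedLT_wellFoundedGT_of_le hab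
  exact ⟨⟨n, fun i => f i, fun i => by simpa using hf i i.2⟩, rfl, rfl⟩

lemma exists_covBy_relSeries_of_ltSeries [OrderBot α] [WellFoundedLT α] [WellFoundedGT α]
    (l : LTSeries α) :
    ∃ s : RelSeries {(a, b) : α × α | a ⋖ b},
      s.head = ⊥ ∧ s.last = l.last ∧ l.length ≤ s.length := by
  obtain ⟨s, i, hs, hi₀, hi⟩ := l.exists_relSeries_covBy
  have hhead : s.head = l.head := by simpa [hi₀, RelSeries.head] using! congrFun hs 0
  have hlast : s.last = l.last := by
    simpa [hi, RelSeries.last] using! congrFun hs (Fin.last l.length)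
  obtain ⟨t, ht₀, ht⟩ := exists_covBy_relSeries_of_le (bot_le (a := l.head))
  have hlen : l.length ≤ s.length := by simpa using Fintype.card_le_of_embedding i
  exact ⟨t.smash s (ht.trans hhead.symm), by simpa, by simpa, hlen.trans (Nat.le_add_left _ _)⟩

lemma length_le_height_Ici_of_covBy_relSeries (s : RelSeries {(a, b) : α × α | a ⋖ b})
    {a : α} (ha : s.head = a) (hs : a ≤ s.last) :
    (s.length : ℕ∞) ≤ Order.height (⟨s.last, hs⟩ : Set.Ici a) := by
  let l : LTSeries α := s.ofLE fun _ h => h.lt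
  exact Order.length_le_height (p := .mk s.length
    (fun i => ⟨s i, ha.ge.trans (l.monotone (Fin.zero_le i))⟩) fun _ _ hij => l.strictMono hij)
    le_rfl

theorem IsCatenaryOrder.height_le_add [OrderBot α] [WellFoundedLT α] [WellFoundedGT α]
    (hα : IsCatenaryOrder α) {a b : α} (hab : a ≤ b) :
    Order.height b ≤ Order.height a + Order.height (⟨b, hab⟩ : Set.Ici a) := by
  obtain ⟨s, hs, rfl⟩ := exists_covBy_relSeries_of_le (bot_le (a := a))
  obtain ⟨t, ht, rfl⟩ := exists_covBy_relSeries_of_le hab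
  refine Order.height_le fun l hl => ?_
  obtain ⟨u, hu₀, hu, hlen⟩ := exists_covBy_relSeries_of_ltSeries l
  have hlen' : u.length = s.length + t.length :=
    hα u (s.smash t ht.symm) (by simp [hu₀, hs]) (by simp [hu, hl])
  calc (l.length : ℕ∞) ≤ s.length + t.length := by exact_mod_cast hlen.trans hlen'.le
    _ ≤ _ := add_le_add
      (Order.length_le_height (p := (s.ofLE fun _ h => h.lt : LTSeries α)) le_rfl)
      (length_le_height_Ici_of_covBy_relSeries t ht hab)

lemma IsCatenaryRing.isCatenaryOrder_primeSpectrum {A : Type*} [CommRing A]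
    (hA : IsCatenaryRing A) : IsCatenaryOrder (PrimeSpectrum A) := by
  have hchain (s : RelSeries {(a, b) : PrimeSpectrum A × PrimeSpectrum A | a ⋖ b}) :
      IsSaturatedPrimeChain A s.head.asIdeal s.last.asIdeal
        (s.toList.map PrimeSpectrum.asIdeal) := by
    refine ⟨by simp +contextual [PrimeSpectrum.isPrime], ?_, ?_, ?_⟩
    · rw [List.head?_map, List.head?_eq_some_head s.toList_ne_nil, s.head_toList, Option.map_some]
    · rw [List.getLast?_map, List.getLast?_eq_some_getLast s.toList_ne_nil, s.getLast_toList,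
        Option.map_some]
    · exact (List.isChain_map _).2 (s.isChain_toList.imp fun p q hpq =>
        ⟨hpq.lt, fun r hr h => hpq.2 (c := ⟨r, hr⟩) h.1 h.2⟩)
  intro s t hhead hlast
  have hle : s.head ≤ s.last := LTSeries.head_le_last (s.ofLE fun _ h => h.lt)
  have ht := hchain t
  rw [← hhead, ← hlast] at ht
  simpa using hA _ _ s.head.2 s.last.2 hle _ _ (hchain s) ht

lemma IsUniversallyCatenary.isCatenaryOrder_mvPolynomial {A : Type*} [CommRing A]
    (hA : IsUniversallyCatenary A) (n : ℕ) :
    IsCatenaryOrder (PrimeSpectrum (MvPolynomial (Fin n) A)) :=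
  (hA n ⊥).isCatenaryOrder_primeSpectrum.of_orderIso
    (PrimeSpectrum.comapEquiv (RingEquiv.quotientBot _))

variable {A : Type*} [CommRing A]

lemma height_Ici_primeSpectrum {p q : PrimeSpectrum A} (hpq : p ≤ q) :
    Order.height (⟨q, hpq⟩ : Set.Ici p) =
      (q.asIdeal.map (Ideal.Quotient.mk p.asIdeal)).height := by
  let e : PrimeSpectrum (A ⧸ p.asIdeal) ≃o Set.Ici p :=
    Ideal.primeSpectrumQuotientOrderIsoZeroLocus p.asIdeal
  rw [← Order.height_orderIso e.symm, ← PrimeSpectrum.height_eq_orderHeight]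
  rfl

lemma wellFoundedLT_primeSpectrum [IsNoetherianRing A] : WellFoundedLT (PrimeSpectrum A) :=
  StrictMono.wellFoundedLT (f := fun p : PrimeSpectrum A => p.asIdeal.height)
    fun _ _ hpq => Ideal.height_strict_mono_of_isPrime_of_isPrime hpq

lemma wellFoundedGT_primeSpectrum [IsNoetherianRing A] : WellFoundedGT (PrimeSpectrum A) :=
  StrictMono.wellFoundedGT (f := PrimeSpectrum.asIdeal) fun _ _ => id

theorem height_le_height_add_height_map_quotient [IsDomain A] [IsNoetherianRing A]
    (hA : IsCatenaryOrder (PrimeSpectrum A)) {p q : Ideal A} [hp : p.IsPrime] [hq : q.IsPrime]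
    (hpq : p ≤ q) : q.height ≤ p.height + (q.map (Ideal.Quotient.mk p)).height := by
  have : WellFoundedLT (PrimeSpectrum A) := wellFoundedLT_primeSpectrum
  have : WellFoundedGT (PrimeSpectrum A) := wellFoundedGT_primeSpectrum
  have hle : (⟨p, hp⟩ : PrimeSpectrum A) ≤ ⟨q, hq⟩ := hpq
  simpa only [height_Ici_primeSpectrum, ← PrimeSpectrum.height_eq_orderHeight] using
    hA.height_le_add hle

theorem le_height_of_ofList_take_le [IsDomain A] [IsNoetherianRing A]
    (hA : IsCatenaryOrder (PrimeSpectrum A)) {cs : List A} {q : Ideal A}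
    (hq : q ∈ (Ideal.ofList cs).minimalPrimes) (hlen : (cs.length : ℕ∞) ≤ q.height) {i : ℕ}
    (hi : i ≤ cs.length) {Q : Ideal A} [Q.IsPrime] (hcs : Ideal.ofList (cs.take i) ≤ Q)
    (hQq : Q ≤ q) : (i : ℕ∞) ≤ Q.height := by
  have hprime : q.IsPrime := hq.isPrime
  have hsplit : Ideal.ofList (cs.take i) ⊔ Ideal.ofList (cs.drop i) = Ideal.ofList cs := by
    rw [← Ideal.ofList_append, List.take_append_drop]
  have hmin : q.map (Ideal.Quotient.mk Q) ∈
      (Ideal.ofList ((cs.drop i).map (Ideal.Quotient.mk Q))).minimalPrimes := by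
    rw [← Ideal.map_ofList]
    refine ⟨⟨Ideal.isPrime_map_quotientMk_of_isPrime hQq,
      Ideal.map_mono ((hsplit ▸ le_sup_right).trans hq.1.2)⟩, fun P ⟨hP, hdrop⟩ hPq => ?_⟩
    have hQP : Q ≤ P.comap (Ideal.Quotient.mk Q) := fun x hx => by
      simp [Ideal.mem_comap, Ideal.Quotient.eq_zero_iff_mem.2 hx]
    refine Ideal.map_le_iff_le_comap.2 (hq.2 ⟨hP.comap _, ?_⟩ ?_)
    · rw [← hsplit]
      exact sup_le (hcs.trans hQP) (Ideal.map_le_iff_le_comap.1 hdrop)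
    · exact (Ideal.comap_mono hPq).trans_eq (Ideal.comap_map_mk hQq)
  have hdrop : (q.map (Ideal.Quotient.mk Q)).height ≤ (cs.length - i : ℕ) := by
    simpa using height_le_length_of_mem_minimalPrimes_ofList hmin
  have hcat := (hlen.trans (height_le_height_add_height_map_quotient hA hQq)).trans
    (add_le_add_right hdrop _)
  obtain ⟨h, hh⟩ := ENat.ne_top_iff_exists.1 (Ideal.height_ne_top_of_isPrime (I := Q))
  rw [← hh] at hcat ⊢
  norm_cast at hcat ⊢
  lia

end Catenary

section FlatLocal

open RingTheory.Sequence

variable {A M : Type*} [CommRing A] [AddCommGroup M] [Module A M]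

lemma HasDepthGEHeight.localizedModule (hM : HasDepthGEHeight A M) (S : Submonoid A) :
    HasDepthGEHeight (Localization S) (LocalizedModule S M) := fun P _ =>
  (hM _).of_flat (IsLocalizedModule.isBaseChange S (Localization S)
    (LocalizedModule.mkLinearMap S M)) (IsLocalization.height_under S P).ge

theorem isWeaklyRegular_localizedModule_of_isCatenaryOrder [IsDomain A] [IsNoetherianRing A]
    (hA : IsCatenaryOrder (PrimeSpectrum A)) (hM : HasDepthGEHeight A M) {cs : List A}
    {q : Ideal A} [q.IsPrime] (hq : q ∈ (Ideal.ofList cs).minimalPrimes)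
    (hlen : (cs.length : ℕ∞) ≤ q.height) :
    IsWeaklyRegular (LocalizedModule q.primeCompl M) cs := by
  rw [← isWeaklyRegular_map_algebraMap_iff (Localization.AtPrime q)]
  refine isWeaklyRegular_of_forall_le_height (hM.localizedModule _) fun i hi Q hQ hcs => ?_
  rw [List.length_map] at hi
  rw [← List.map_take, ← Ideal.map_ofList, Ideal.map_le_iff_le_comap] at hcs
  rw [← IsLocalization.height_under q.primeCompl Q]
  have hQq : Q.under A ≤ q := (Ideal.comap_mono (le_maximalIdeal hQ.ne_top)).trans_eq
    Localization.AtPrime.under_maximalIdeal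
  exact le_height_of_ofList_take_le hA hq hlen hi hcs hQq

variable {B N : Type*} [CommRing B] [IsLocalRing B] [Algebra A B] [Module.Flat A B]
  [AddCommGroup N] [Module A N] [Module B N] [IsScalarTower A B N]

lemma under_maximalIdeal_mem_minimalPrimes_of_radical_eq {I : Ideal A}
    (hI : (I.map (algebraMap A B)).radical = maximalIdeal B) :
    (maximalIdeal B).under A ∈ I.minimalPrimes := by
  have hle : I.map (algebraMap A B) ≤ maximalIdeal B := hI ▸ Ideal.le_radical
  refine ⟨⟨inferInstance, Ideal.map_le_iff_le_comap.1 hle⟩, fun Q ⟨hQ, hIQ⟩ hQle => ?_⟩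
  have : Algebra.HasGoingDown A B := .of_flat
  obtain ⟨Q', -, hQ', hover⟩ := Ideal.exists_ideal_le_liesOver_of_le (maximalIdeal B) hQle
  rw [hover.over] at hIQ ⊢
  refine Ideal.comap_mono ?_
  rw [← hI, hQ'.radical_le_iff]
  exact Ideal.map_le_iff_le_comap.2 hIQ

theorem isWeaklyRegular_map_of_radical_eq_maximalIdeal [IsDomain A] [IsNoetherianRing A]
    (hA : IsCatenaryOrder (PrimeSpectrum A)) (hM : HasDepthGEHeight A M) {g : M →ₗ[A] N}
    (hg : IsBaseChange B g) {cs : List A}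
    (hcs : (Ideal.ofList (cs.map (algebraMap A B))).radical = maximalIdeal B)
    (hlen : (cs.length : ℕ∞) ≤ ((maximalIdeal B).under A).height) :
    IsWeaklyRegular N (cs.map (algebraMap A B)) := by
  rw [isWeaklyRegular_map_algebraMap_iff]
  rw [← Ideal.map_ofList] at hcs
  refine isWeaklyRegular_of_isWeaklyRegular_localizedModule hg
    ((maximalIdeal B).under A).primeCompl (fun s => ?_)
    (isWeaklyRegular_localizedModule_of_isCatenaryOrder hA hM
      (under_maximalIdeal_mem_minimalPrimes_of_radical_eq hcs) hlen)
  exact notMem_maximalIdeal.1 s.2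

end FlatLocal

section Associated

open RingTheory.Sequence Pointwise

variable {A : Type*} [CommRing A]

lemma span_singleton_eq_of_associated {a b : A} (hab : Associated a b) :
    Ideal.span {a} = Ideal.span {b} := by
  obtain ⟨u, rfl⟩ := hab
  exact (Ideal.span_singleton_mul_right_unit u.isUnit a).symm

lemma ofList_eq_of_forall₂_associated {rs ts : List A} (h : List.Forall₂ Associated rs ts) :
    Ideal.ofList rs = Ideal.ofList ts := by
  induction h with
  | nil => rfl
  | cons hab _ ih =>
    rw [Ideal.ofList_cons, Ideal.ofList_cons, span_singleton_eq_of_associated hab, ih]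

lemma isWeaklyRegular_of_forall₂_associated {M : Type*} [AddCommGroup M] [Module A M]
    {rs ts : List A} (h : List.Forall₂ Associated rs ts) (hts : IsWeaklyRegular M ts) :
    IsWeaklyRegular M rs := by
  induction h generalizing M with
  | nil => exact .nil A M
  | @cons a b rs ts hab _ ih =>
    rw [isWeaklyRegular_cons_iff] at hts ⊢
    obtain ⟨u, hu⟩ := hab.symm
    have hsmul : (a • ⊤ : Submodule A M) = b • ⊤ := by
      rw [← Submodule.ideal_span_singleton_smul, ← Submodule.ideal_span_singleton_smul,
        span_singleton_eq_of_associated hab]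
    refine ⟨?_, ((Submodule.quotEquivOfEq _ _ hsmul).isWeaklyRegular_congr rs).2 (ih hts.2)⟩
    rw [← hu]
    exact hts.1.mul (u.isUnit.isSMulRegular M)

lemma exists_forall₂_associated_map_algebraMap {B : Type*} [CommRing B] [Algebra A B]
    (S : Submonoid A) [IsLocalization S B] (rs : List B) :
    ∃ ts : List A, List.Forall₂ Associated rs (ts.map (algebraMap A B)) := by
  induction rs with
  | nil => exact ⟨[], .nil⟩
  | cons r rs ih =>
    obtain ⟨ts, hts⟩ := ih
    obtain ⟨⟨t, s⟩, hrt⟩ := IsLocalization.surj S r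
    exact ⟨t :: ts, .cons ⟨(IsLocalization.map_units B s).unit, hrt⟩ hts⟩

end Associated

section Variables

universe v

lemma exists_finset_le_height_comap {T : Type*} [CommRing T] (P : Ideal T) [P.IsPrime] {n : ℕ}
    (hn : n ≤ P.height) : ∃ F : Finset T, ∀ (S : Type v) [CommRing S] (φ : S →+* T),
      (F : Set T) ⊆ Set.range φ → n ≤ (P.comap φ).height := by
  classical
  induction n generalizing P with
  | zero => exact ⟨∅, by simp⟩
  | succ n ih =>
    have hlt : ¬P.height ≤ n := fun h => Nat.not_succ_le_self n (by exact_mod_cast hn.trans h)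
    simp only [Ideal.height_le_iff, not_forall, not_lt] at hlt
    obtain ⟨Q, hQ, hQP, hQn⟩ := hlt
    obtain ⟨F, hF⟩ := ih Q hQn
    obtain ⟨x, hxP, hxQ⟩ := Set.exists_of_ssubset hQP
    refine ⟨insert x F, fun S _ φ hφ => ?_⟩
    rw [Finset.coe_insert, Set.insert_subset_iff] at hφ
    obtain ⟨⟨y, rfl⟩, hFφ⟩ := hφ
    have hlt : Q.comap φ < P.comap φ :=
      SetLike.lt_iff_le_and_exists.2 ⟨Ideal.comap_mono hQP.le, y, hxP, hxQ⟩
    push_cast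
    exact (add_le_add_left (hF S φ hFφ) 1).trans (Ideal.height_add_one_le_of_lt_of_isPrime hlt)

variable {R X : Type*} [CommRing R]

lemma exists_subset_range_rename (F : Finset (MvPolynomial X R)) :
    ∃ (n : ℕ) (f : Fin n → X), f.Injective ∧
      (F : Set (MvPolynomial X R)) ⊆ Set.range (MvPolynomial.rename (R := R) f) := by
  classical
  let V : Finset X := F.biUnion MvPolynomial.vars
  have hinj : Function.Injective fun i => (V.equivFin.symm i : X) :=
    Subtype.val_injective.comp V.equivFin.symm.injective
  refine ⟨V.card, _, hinj, fun p hp =>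
    MvPolynomial.exists_rename_eq_of_vars_subset_range p _ hinj fun x hx => ?_⟩
  exact ⟨V.equivFin ⟨x, Finset.mem_biUnion.2 ⟨p, hp, hx⟩⟩, by simp⟩

lemma flat_rename_sumInr (σ τ : Type*) :
    (MvPolynomial.rename (R := R) (Sum.inr : τ → σ ⊕ τ)).toRingHom.Flat := by
  rw [← RingHom.Flat.comp_iff_of_bijective_left
    (g := (MvPolynomial.sumAlgEquiv R σ τ).toAlgHom.toRingHom)
    (MvPolynomial.sumAlgEquiv R σ τ).bijective]
  have hcomp : (MvPolynomial.sumAlgEquiv R σ τ).toAlgHom.toRingHom.comp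
      (MvPolynomial.rename Sum.inr).toRingHom = algebraMap (MvPolynomial τ R) _ :=
    congrArg AlgHom.toRingHom (MvPolynomial.sumAlgEquiv_comp_rename_inr R σ τ)
  rw [hcomp, RingHom.flat_algebraMap_iff]
  infer_instance

lemma flat_rename {σ : Type*} {f : σ → X} (hf : f.Injective) :
    (MvPolynomial.rename (R := R) f).toRingHom.Flat := by
  classical
  let e : ↥(Set.range f)ᶜ ⊕ σ ≃ X := (Equiv.sumComm _ _).trans
    (((Equiv.ofInjective f hf).sumCongr (.refl _)).trans (Equiv.Set.sumCompl (Set.range f)))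
  have he : e ∘ Sum.inr = f := rfl
  have hcomp : (MvPolynomial.rename (R := R) f).toRingHom =
      (MvPolynomial.renameEquiv R e).toRingEquiv.toRingHom.comp
        (MvPolynomial.rename Sum.inr).toRingHom := by
    ext <;> simp [← he]
  rw [hcomp]
  exact (flat_rename_sumInr _ _).comp (.of_bijective (MvPolynomial.renameEquiv R e).bijective)

end Variables

section Nontrivial

open TensorProduct

lemma maximalIdeal_smul_top_ne_top_iff (A M : Type*) [CommRing A] [IsLocalRing A]
    [AddCommGroup M] [Module A M] :
    maximalIdeal A • (⊤ : Submodule A M) ≠ ⊤ ↔ Nontrivial (ResidueField A ⊗[A] M) := by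
  rw [← Submodule.Quotient.nontrivial_iff]
  exact (quotTensorEquivQuotSMul M (maximalIdeal A)).symm.toEquiv.nontrivial_congr

lemma maximalIdeal_smul_top_tensorProduct_ne_top {A B M : Type*} [CommRing A] [IsLocalRing A]
    [CommRing B] [IsLocalRing B] [Algebra A B] [IsLocalHom (algebraMap A B)]
    [AddCommGroup M] [Module A M] (hM : maximalIdeal A • (⊤ : Submodule A M) ≠ ⊤) :
    maximalIdeal B • (⊤ : Submodule B (B ⊗[A] M)) ≠ ⊤ := by
  rw [maximalIdeal_smul_top_ne_top_iff] at hM ⊢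
  let e := (AlgebraTensorModule.cancelBaseChange A B B (ResidueField B) M).toEquiv.trans
    (AlgebraTensorModule.cancelBaseChange A (ResidueField A) (ResidueField A)
      (ResidueField B) M).symm.toEquiv
  have := Module.FaithfullyFlat.lTensor_nontrivial (ResidueField A) (ResidueField B)
    (ResidueField A ⊗[A] M)
  exact e.nontrivial

end Nontrivial

section PolynomialBaseChange

open RingTheory.Sequence TensorProduct

variable {R X : Type*} [CommRing R] {E : Type*} [AddCommGroup E] [Module R E]

lemma isWeaklyRegular_localization_of_flat {S T : Type*} [CommRing S] [CommRing T] [Algebra R S]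
    [Algebra R T] [Algebra S T] [IsScalarTower R S T] [Module.Flat S T] [IsDomain S]
    [IsNoetherianRing S] (hS : IsCatenaryOrder (PrimeSpectrum S))
    (hE : HasDepthGEHeight S (S ⊗[R] E)) (P : Ideal T) [P.IsPrime] {cs : List S}
    (hrad : (Ideal.ofList (cs.map (algebraMap S (Localization.AtPrime P)))).radical =
      maximalIdeal (Localization.AtPrime P))
    (hlen : cs.length ≤ (P.under S).height) :
    IsWeaklyRegular (Localization.AtPrime P ⊗[R] E)
      (cs.map (algebraMap S (Localization.AtPrime P))) := by
  have : Module.Flat T (Localization.AtPrime P) := IsLocalization.flat _ P.primeCompl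
  have : Module.Flat S (Localization.AtPrime P) := .trans S T _
  have : IsScalarTower R S (Localization.AtPrime P) := .to₁₂₄ R S T _
  have hunder : (maximalIdeal (Localization.AtPrime P)).under S = P.under S := by
    rw [← Ideal.under_under (B := T), Localization.AtPrime.under_maximalIdeal]
  rw [← hunder] at hlen
  have hbc : IsBaseChange (Localization.AtPrime P) (AlgebraTensorModule.map
      (Algebra.linearMap S (Localization.AtPrime P)) (LinearMap.id (R := R) (M := E))) :=
    isBaseChange_map_linearMap_id
  exact isWeaklyRegular_map_of_radical_eq_maximalIdeal hS hE hbc hrad hlen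

lemma isWeaklyRegular_map_of_subset_range_rename [IsDomain R] [IsNoetherianRing R]
    (hR : IsUniversallyCatenary R) (hE : HasDepthGEHeight R E) (P : Ideal (MvPolynomial X R))
    [P.IsPrime] {n : ℕ} {f : Fin n → X} (hf : f.Injective) {ts : List (MvPolynomial X R)}
    (hts : {t | t ∈ ts} ⊆ Set.range (MvPolynomial.rename (R := R) f))
    (hrad : (Ideal.ofList (ts.map (algebraMap _ (Localization.AtPrime P)))).radical =
      maximalIdeal (Localization.AtPrime P))
    (hlen : ts.length ≤ (P.comap (MvPolynomial.rename (R := R) f).toRingHom).height) :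
    IsWeaklyRegular (Localization.AtPrime P ⊗[R] E)
      (ts.map (algebraMap _ (Localization.AtPrime P))) := by
  let φ := (MvPolynomial.rename (R := R) f).toRingHom
  let _ : Algebra (MvPolynomial (Fin n) R) (MvPolynomial X R) := φ.toAlgebra
  have : IsScalarTower R (MvPolynomial (Fin n) R) (MvPolynomial X R) :=
    .of_algebraMap_eq fun r => (AlgHom.commutes (MvPolynomial.rename f) r).symm
  have : Module.Flat (MvPolynomial (Fin n) R) (MvPolynomial X R) := flat_rename hf
  obtain ⟨cs, rfl⟩ : ts ∈ Set.range (List.map φ) := by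
    rw [Set.range_list_map]
    exact hts
  have hmap : (cs.map φ).map (algebraMap _ (Localization.AtPrime P)) =
      cs.map (algebraMap _ (Localization.AtPrime P)) := by
    rw [List.map_map, IsScalarTower.algebraMap_eq (MvPolynomial (Fin n) R) (MvPolynomial X R),
      RingHom.coe_comp]
    rfl
  rw [List.length_map] at hlen
  rw [hmap] at hrad ⊢
  exact isWeaklyRegular_localization_of_flat (hR.isCatenaryOrder_mvPolynomial n)
    (hE.mvPolynomial n) P hrad hlen

lemma isWeaklyRegular_tensorProduct_of_isSystemOfParameters [IsDomain R] [IsNoetherianRing R]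
    (hR : IsUniversallyCatenary R) (hE : HasDepthGEHeight R E) (P : Ideal (MvPolynomial X R))
    [P.IsPrime] {rs : List (Localization.AtPrime P)}
    (hrs : IsSystemOfParameters (Localization.AtPrime P) rs) :
    IsWeaklyRegular (Localization.AtPrime P ⊗[R] E) rs := by
  classical
  obtain ⟨ts, hts⟩ :=
    exists_forall₂_associated_map_algebraMap (A := MvPolynomial X R) P.primeCompl rs
  have hlen : ts.length = rs.length := by simpa using hts.length_eq.symm
  have hheight : ts.length ≤ P.height := by
    rw [hlen, ← WithBot.coe_le_coe, ← IsLocalization.AtPrime.ringKrullDim_eq_height P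
      (Localization.AtPrime P)]
    exact hrs.2.le
  obtain ⟨F, hF⟩ := exists_finset_le_height_comap P hheight
  obtain ⟨n, f, hf, hrange⟩ := exists_subset_range_rename (F ∪ ts.toFinset)
  rw [Finset.coe_union, Set.union_subset_iff, List.coe_toFinset] at hrange
  refine isWeaklyRegular_of_forall₂_associated hts
    (isWeaklyRegular_map_of_subset_range_rename hR hE P hf hrange.2 ?_
      (hF _ (MvPolynomial.rename f).toRingHom hrange.1))
  rw [← ofList_eq_of_forall₂_associated hts]
  exact hrs.1

lemma isLocalHom_algebraMap_localization [IsLocalRing R] {T : Type*} [CommRing T] [Algebra R T]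
    (P : Ideal T) [P.IsPrime] (hP : (maximalIdeal R).map (algebraMap R T) ≤ P) :
    IsLocalHom (algebraMap R (Localization.AtPrime P)) := by
  refine ((local_hom_TFAE _).out 0 2).2 ?_
  rw [IsScalarTower.algebraMap_eq R T, ← Ideal.map_map,
    ← Localization.AtPrime.map_eq_maximalIdeal]
  exact Ideal.map_mono hP

theorem bbcm_base_change_general [IsLocalRing R] [IsNoetherianRing R] [IsDomain R]
    (hucat : IsUniversallyCatenary R) (hE : IsBalancedBigCohenMacaulayModule R E)
    (P : Ideal (MvPolynomial X R)) [P.IsPrime]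
    (hP : (maximalIdeal R).map MvPolynomial.C ≤ P) :
    IsBalancedBigCohenMacaulayModule (Localization.AtPrime P)
      (Localization.AtPrime P ⊗[R] E) := by
  have := isLocalHom_algebraMap_localization P hP
  have hnt := maximalIdeal_smul_top_tensorProduct_ne_top (B := Localization.AtPrime P) hE.1
  refine ⟨hnt, fun rs hrs => ⟨isWeaklyRegular_tensorProduct_of_isSystemOfParameters hucat
    (.of_isBalancedBigCohenMacaulayModule hE) P hrs, fun htop => hnt ?_⟩⟩
  rw [← hrs.1, ← top_le_iff]
  exact htop.le.trans (Submodule.smul_mono_left Ideal.le_radical)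

end PolynomialBaseChange

open TensorProduct in
/-- **Corollary 4.3.** Let `(R, 𝔪)` be a universally catenary Noetherian local integral
domain and `E` a balanced big Cohen–Macaulay `R`-module.  For any set `X` of
indeterminates, with `B = R[X]_{𝔪R[X]}`, the module `B ⊗_R E` is a balanced big
Cohen–Macaulay `B`-module. -/
theorem bbcm_base_change {R : Type*} [CommRing R] [IsLocalRing R] [IsNoetherianRing R]
    [IsDomain R] (hucat : IsUniversallyCatenary R)
    (E : Type*) [AddCommGroup E] [Module R E]
    (hE : IsBalancedBigCohenMacaulayModule R E)
    (X : Type*)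
    [hP : (Ideal.map (MvPolynomial.C : R →+* MvPolynomial X R) (maximalIdeal R)).IsPrime] :
    IsBalancedBigCohenMacaulayModule
      (Localization.AtPrime (Ideal.map (MvPolynomial.C : R →+* MvPolynomial X R)
        (maximalIdeal R)))
      ((Localization.AtPrime (Ideal.map (MvPolynomial.C : R →+* MvPolynomial X R)
        (maximalIdeal R))) ⊗[R] E) :=
  bbcm_base_change_general hucat hE _ le_rfl
end

section
/- Let R = k[x_1, …, x_d] with d ≥ 2 be a polynomial ring over a field k, standard graded, and let M be a nonzero finitely generated graded R-module generated in degree 0. If M is torsion-free, then M is a free R-module if and only if e_1(M) = 0. -/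
/-- `IsGrading k R M ℳ`: the family of `k`-subspaces `ℳ j` is a grading of the module `M`
over the standard graded polynomial ring, compatible with the grading of the polynomial
ring by homogeneous components. -/
def IsGrading (k : Type*) [Field k] (d : ℕ) (M : Type*) [AddCommGroup M]
    [Module (MvPolynomial (Fin d) k) M] [Module k M]
    [IsScalarTower k (MvPolynomial (Fin d) k) M] (ℳ : ℕ → Submodule k M) : Prop :=
  DirectSum.IsInternal (fun j => ℳ j) ∧
    ∀ (i j : ℕ) (r : MvPolynomial (Fin d) k),
      r ∈ MvPolynomial.homogeneousSubmodule (Fin d) k i →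
      ∀ m ∈ ℳ j, r • m ∈ ℳ (i + j)

/-- `IsHilbertPolyGraded k ℳ t e`: the integers `e 0, …, e t` are the Hilbert coefficients
of the graded module with components `ℳ j`:
`∑_{j=0}^{n} dim_k ℳ j = ∑_{i=0}^{t} (-1)^i eᵢ binom(n + t - i, t - i)` for all large `n`. -/
def IsHilbertPolyGraded (k : Type*) [Field k] {M : Type*} [AddCommGroup M] [Module k M]
    (ℳ : ℕ → Submodule k M) (t : ℕ) (e : ℕ → ℤ) : Prop :=
  ∃ n₀ : ℕ, ∀ n ≥ n₀,
    (∑ j ∈ Finset.range (n + 1), (Module.finrank k (ℳ j) : ℤ)) =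
      ∑ i ∈ Finset.range (t + 1), (-1) ^ i * e i * ((n + (t - i)).choose (t - i) : ℤ)

/-!
Let `v` be a finite generating family of `M` in degree `0`. The graded pieces of `M` of degree at
most `n` add up to `∑ l, R_{≤ n} • v l`, so `H(n) = ∑_{j ≤ n} dim ℳ j` is the dimension of this
space. If `M` is free, then it has a basis of `r` elements in degree `0`, hence
`H(n) = r * binom(n + d, d)` and `e₁ = 0`.

Suppose `M` is torsion-free but not free, and let `b` be a maximal linearly independent subfamily
of `v`, with `r` elements. A common denominator embeds `M` into `∑ i, R • b i` with a bounded shift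
of degrees, so that `H(n) ≤ r * binom(n + s + d, d)` and `e₀ ≤ r`. Some generator `m` of `v` lies
outside `∑ i, R • b i`, and since `R` is factorial, the conductor `{g | g • m ∈ ∑ i, R • b i}` is
contained in `p R` for some prime `p`. The relations between `m` and `b` of degree at most `n`
therefore form a space of dimension at most `binom(n - 1 + d, d)`, which yields
`r * binom(n + d, d) + binom(n + d - 1, d - 1) ≤ H(n)`. As `e₀ ≤ r`, the last
binomial forces `e₁ < 0`.
-/

open MvPolynomial Filter Topology

section HilbertSum

/-- The alternating binomial sum on the right-hand side of `IsHilbertPolyGraded`, that is, the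
Hilbert polynomial with coefficients `e 0, …, e t` evaluated at `n`. -/
def hilbertSum (t : ℕ) (e : ℕ → ℤ) (n : ℕ) : ℤ :=
  ∑ i ∈ Finset.range (t + 1), (-1) ^ i * e i * ((n + (t - i)).choose (t - i) : ℤ)

theorem hilbertSum_succ (t : ℕ) (e : ℕ → ℤ) (n : ℕ) :
    hilbertSum (t + 1) e n =
      e 0 * ((n + (t + 1)).choose (t + 1) : ℤ) - hilbertSum t (fun i => e (i + 1)) n := by
  simp only [hilbertSum, Finset.sum_range_succ' _ (t + 1), Nat.add_sub_add_right, pow_succ]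
  simp [sub_eq_neg_add]

theorem tendsto_choose_add_div_pow (s m : ℕ) :
    Tendsto (fun n : ℕ => ((n + s).choose m : ℝ) / (n : ℝ) ^ m) atTop
      (𝓝 (1 / (m.factorial : ℝ))) := by
  have choose_equiv : Tendsto (fun n : ℕ => (n.choose m : ℝ) / (n : ℝ) ^ m) atTop
      (𝓝 (1 / (m.factorial : ℝ))) := by
    have h := ((isEquivalent_choose m).div
      (Asymptotics.IsEquivalent.refl (u := fun n : ℕ => (n : ℝ) ^ m))).symm.tendsto_nhds
      (c := 1 / (m.factorial : ℝ)) (tendsto_const_nhds.congr' ?_)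
    · exact h
    · filter_upwards [eventually_gt_atTop 0] with n hn
      simp only [Pi.div_apply]
      field_simp
  have shift_pow : Tendsto (fun n : ℕ => (((n + s : ℕ) : ℝ) / n) ^ m) atTop (𝓝 1) := by
    have h := (tendsto_const_div_atTop_nhds_zero_nat (s : ℝ)).const_add 1
    have h' := (h.congr' (f₂ := fun n : ℕ => ((n + s : ℕ) : ℝ) / n) ?_).pow m
    · simpa using h'
    · filter_upwards [eventually_gt_atTop 0] with n hn
      push_cast
      field_simp
  have h := (choose_equiv.comp (tendsto_add_atTop_nat s)).mul shift_pow
  rw [mul_one] at h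
  refine h.congr' ?_
  filter_upwards [eventually_gt_atTop 0] with n hn
  simp only [Function.comp_apply, div_pow]
  field_simp

theorem tendsto_hilbertSum_div_pow (t : ℕ) (e : ℕ → ℤ) :
    Tendsto (fun n : ℕ => (hilbertSum t e n : ℝ) / (n : ℝ) ^ t) atTop
      (𝓝 ((e 0 : ℝ) / (t.factorial : ℝ))) := by
  induction t generalizing e with
  | zero => simp [hilbertSum]
  | succ t ih =>
    have leading := (tendsto_choose_add_div_pow (t + 1) (t + 1)).const_mul (e 0 : ℝ)
    have rest := (ih fun i => e (i + 1)).mul tendsto_one_div_atTop_nhds_zero_nat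
    convert leading.sub rest using 2 with n
    · rw [hilbertSum_succ]
      push_cast
      rw [sub_div, mul_div_assoc, div_mul_div_comm, mul_one, pow_succ _ t]
    · ring

theorem coeff_zero_le_of_hilbertSum_le {t s : ℕ} {e : ℕ → ℤ} {r : ℤ}
    (h : ∀ᶠ n : ℕ in atTop, hilbertSum t e n ≤ r * ((n + s).choose t : ℤ)) : e 0 ≤ r := by
  have lim := le_of_tendsto_of_tendsto (tendsto_hilbertSum_div_pow t e)
    ((tendsto_choose_add_div_pow s t).const_mul (r : ℝ)) (h.mono fun n hn => by
      simp only [← mul_div_assoc]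
      gcongr
      exact_mod_cast hn)
  rw [mul_one_div, div_le_div_iff_of_pos_right (by positivity)] at lim
  exact_mod_cast lim

theorem coeff_zero_eq_of_hilbertSum_eq {t s : ℕ} {e : ℕ → ℤ} {r : ℤ}
    (h : ∀ᶠ n : ℕ in atTop, hilbertSum t e n = r * ((n + s).choose t : ℤ)) : e 0 = r := by
  have lim := tendsto_nhds_unique_of_eventuallyEq (tendsto_hilbertSum_div_pow t e)
    ((tendsto_choose_add_div_pow s t).const_mul (r : ℝ)) (h.mono fun n hn => by
      simp only [← mul_div_assoc]
      congr 1
      exact_mod_cast hn)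
  rw [mul_one_div, div_left_inj' (by positivity)] at lim
  exact_mod_cast lim

theorem coeff_one_eq_zero_of_hilbertSum_eq {t : ℕ} {e : ℕ → ℤ} {r : ℤ}
    (h : ∀ᶠ n : ℕ in atTop, hilbertSum (t + 1) e n = r * ((n + (t + 1)).choose (t + 1) : ℤ)) :
    e 1 = 0 := by
  have e_zero : e 0 = r := coeff_zero_eq_of_hilbertSum_eq h
  have tail_eq_zero : ∀ᶠ n in atTop, hilbertSum t (fun i => e (i + 1)) n = 0 :=
    h.mono fun n hn => by rwa [hilbertSum_succ, e_zero, sub_eq_self] at hn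
  exact coeff_zero_eq_of_hilbertSum_eq (t := t) (s := 0) (e := fun i => e (i + 1))
    (by simpa using tail_eq_zero)

theorem coeff_one_neg_of_hilbertSum_bounds {t s : ℕ} {e : ℕ → ℤ} {r : ℤ}
    (upper : ∀ᶠ n : ℕ in atTop, hilbertSum (t + 1) e n ≤ r * ((n + s).choose (t + 1) : ℤ))
    (lower : ∀ᶠ n : ℕ in atTop, r * ((n + (t + 1)).choose (t + 1) : ℤ) + ((n + t).choose t : ℤ) ≤
      hilbertSum (t + 1) e n) : e 1 < 0 := by
  have e_zero_le : e 0 ≤ r := coeff_zero_le_of_hilbertSum_le upper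
  have tail_le : ∀ᶠ n : ℕ in atTop,
      hilbertSum t (fun i => e (i + 1)) n ≤ -1 * ((n + t).choose t : ℤ) :=
    lower.mono fun n hn => by
      rw [hilbertSum_succ] at hn
      have := mul_le_mul_of_nonneg_right e_zero_le
        (Int.natCast_nonneg ((n + (t + 1)).choose (t + 1)))
      linarith
  have := coeff_zero_le_of_hilbertSum_le tail_le
  lia

end HilbertSum

section UniqueFactorization

variable {R M ι : Type*} [CommRing R] [AddCommGroup M] [Module R M] {b : ι → M}

theorem exists_eq_smul_of_smul_eq_prime_smul (hb : LinearIndependent R b) {p g : R}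
    (hp : Prime p) (hg : ¬ p ∣ g) {x y : M} (hx : x ∈ Submodule.span R (Set.range b))
    (hy : y ∈ Submodule.span R (Set.range b)) (hxy : g • x = p • y) :
    ∃ z ∈ Submodule.span R (Set.range b), x = p • z := by
  obtain ⟨a, rfl⟩ := Finsupp.mem_span_range_iff_exists_finsupp.1 hx
  obtain ⟨c, rfl⟩ := Finsupp.mem_span_range_iff_exists_finsupp.1 hy
  have coeff_eq : g • a = p • c := hb (by simpa [Finsupp.linearCombination_apply] using hxy)
  have dvd_coeff (i : ι) : p ∣ a i :=
    (hp.dvd_or_dvd ⟨c i, DFunLike.congr_fun coeff_eq i⟩).resolve_left hg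
  choose a' ha' using dvd_coeff
  refine ⟨∑ i ∈ a.support, a' i • b i, Submodule.sum_mem _ fun i _ =>
    Submodule.smul_mem _ _ (Submodule.subset_span ⟨i, rfl⟩), ?_⟩
  rw [Finsupp.sum, Finset.smul_sum]
  exact Finset.sum_congr rfl fun i _ => by rw [smul_smul, ← ha']

theorem exists_prime_forall_dvd_of_smul_mem_span [IsDomain R] [UniqueFactorizationMonoid R]
    [Module.IsTorsionFree R M] (hb : LinearIndependent R b) {m : M}
    (hm : m ∉ Submodule.span R (Set.range b))
    (htors : ∃ f : R, f ≠ 0 ∧ f • m ∈ Submodule.span R (Set.range b)) :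
    ∃ p : R, Prime p ∧ ∀ g : R, g • m ∈ Submodule.span R (Set.range b) → p ∣ g := by
  obtain ⟨f, ⟨hf, hfm⟩, hmin⟩ := (wellFounded_dvdNotUnit (α := R)).has_min
    {f | f ≠ 0 ∧ f • m ∈ Submodule.span R (Set.range b)} htors
  have f_not_unit : ¬ IsUnit f := fun hu => hm ((Submodule.smul_mem_iff_of_isUnit _ hu).1 hfm)
  obtain ⟨p, hp, q, rfl⟩ := WfDvdMonoid.exists_irreducible_factor f_not_unit hf
  have hq : q ≠ 0 := right_ne_zero_of_mul hf
  refine ⟨p, hp.prime, fun g hgm => by_contra fun hpg => ?_⟩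
  obtain ⟨z, hz, hpz⟩ := exists_eq_smul_of_smul_eq_prime_smul hb hp.prime hpg hfm
    (Submodule.smul_mem _ q hgm) (by simp only [smul_smul]; ring_nf)
  have hqm : q • m = z := smul_right_injective M hp.ne_zero (by simpa only [mul_smul] using hpz)
  exact hmin q ⟨hq, hqm ▸ hz⟩ ⟨hq, p, hp.not_isUnit, mul_comm p q⟩

end UniqueFactorization

section BoundedSpan

theorem totalDegree_ne_zero_of_not_isUnit {σ k : Type*} [Field k] {p : MvPolynomial σ k}
    (hp : p ≠ 0) (hunit : ¬ IsUnit p) : p.totalDegree ≠ 0 := by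
  intro hdeg
  obtain ⟨c, rfl⟩ : ∃ c, p = C c := ⟨_, totalDegree_eq_zero_iff_eq_C.1 hdeg⟩
  have hc : c ≠ 0 := fun h => hp (by rw [h, C_0])
  exact hunit (hc.isUnit.map C)

theorem card_finsupp_sum_le (σ : Type*) [Fintype σ] (n : ℕ) :
    Nat.card {s : σ →₀ ℕ | (s.sum fun _ e => e) ≤ n} =
      (n + Fintype.card σ).choose (Fintype.card σ) := by
  classical
  have eq_biUnion : {s : σ →₀ ℕ | (s.sum fun _ e => e) ≤ n} =
      ((Finset.range (n + 1)).biUnion (Finset.univ.finsuppAntidiag ·) : Finset (σ →₀ ℕ)) := by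
    ext s
    simp [Finset.mem_finsuppAntidiag, Finsupp.sum_fintype]
  rw [eq_biUnion, Nat.card_coe_set_eq, Set.ncard_coe_finset, Finset.card_biUnion]
  · simpa [Finset.card_finsuppAntidiag_nat_eq_multichoose] using
      Nat.sum_range_multichoose n (Fintype.card σ)
  · intro i _ j _ hij
    refine Finset.disjoint_left.2 fun s hs hs' => hij ?_
    exact (Finset.mem_finsuppAntidiag.1 hs).1.symm.trans (Finset.mem_finsuppAntidiag.1 hs').1

theorem finrank_restrictTotalDegree (σ R : Type*) [Fintype σ] [CommRing R] [Nontrivial R] (n : ℕ) :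
    Module.finrank R (restrictTotalDegree σ R n) =
      (n + Fintype.card σ).choose (Fintype.card σ) :=
  (Module.finrank_eq_nat_card_basis (basisRestrictSupport R _)).trans (card_finsupp_sum_le σ n)

variable (σ k : Type*) [Field k] {M : Type*} [AddCommGroup M] [Module (MvPolynomial σ k) M]
  [Module k M] [IsScalarTower k (MvPolynomial σ k) M] {ι κ : Type*} [Fintype ι] [Fintype κ]

/-- The `k`-linear map `a ↦ ∑ i, a i • b i` on families of polynomials of total degree at most
`n`. -/
noncomputable def boundedCombination (b : ι → M) (n : ℕ) :
    (ι → restrictTotalDegree σ k n) →ₗ[k] M :=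
  (Fintype.linearCombination (MvPolynomial σ k) b).restrictScalars k ∘ₗ
    (restrictTotalDegree σ k n).subtype.compLeft ι

/-- The `k`-subspace `∑ i, R_{≤ n} • b i` of `M`, where `R = k[σ]`. For a generating family `b` in
degree `0` of a graded module this is the sum of the graded pieces of degree at most `n`, so its
dimension replaces the Hilbert function in arguments that do not involve the grading. -/
noncomputable def boundedSpan (b : ι → M) (n : ℕ) : Submodule k M :=
  LinearMap.range (boundedCombination σ k b n)

variable {σ k}

theorem mem_boundedSpan {b : ι → M} {n : ℕ} {x : M} :
    x ∈ boundedSpan σ k b n ↔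
      ∃ a : ι → MvPolynomial σ k, (∀ i, (a i).totalDegree ≤ n) ∧ ∑ i, a i • b i = x := by
  constructor
  · rintro ⟨a, rfl⟩
    refine ⟨fun i => a i, fun i => (mem_restrictTotalDegree _ _ _).1 (a i).2, ?_⟩
    simp [boundedCombination, Fintype.linearCombination_apply]
  · rintro ⟨a, ha, rfl⟩
    refine ⟨fun i => ⟨a i, (mem_restrictTotalDegree _ _ _).2 (ha i)⟩, ?_⟩
    simp [boundedCombination, Fintype.linearCombination_apply]

instance boundedSpan_finite [Finite σ] (b : ι → M) (n : ℕ) :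
    Module.Finite k (boundedSpan σ k b n) :=
  inferInstanceAs (Module.Finite k (LinearMap.range _))

theorem smul_mem_boundedSpan_add {b : ι → M} {n s : ℕ} {f : MvPolynomial σ k}
    (hf : f.totalDegree ≤ n) {x : M} (hx : x ∈ boundedSpan σ k b s) :
    f • x ∈ boundedSpan σ k b (n + s) := by
  obtain ⟨a, ha, rfl⟩ := mem_boundedSpan.1 hx
  refine mem_boundedSpan.2 ⟨fun i => f * a i, fun i => ?_, by simp [mul_smul, Finset.smul_sum]⟩
  exact (totalDegree_mul _ _).trans (add_le_add hf (ha i))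

theorem boundedSpan_le_boundedSpan_add {v : κ → M} {b : ι → M} {s : ℕ}
    (h : ∀ l, v l ∈ boundedSpan σ k b s) (n : ℕ) :
    boundedSpan σ k v n ≤ boundedSpan σ k b (n + s) := by
  intro x hx
  obtain ⟨a, ha, rfl⟩ := mem_boundedSpan.1 hx
  exact Submodule.sum_mem _ fun l _ => smul_mem_boundedSpan_add (ha l) (h l)

theorem apply_mem_boundedSpan_zero (b : ι → M) (i : ι) : b i ∈ boundedSpan σ k b 0 := by
  classical
  refine mem_boundedSpan.2 ⟨Pi.single i 1, fun j => ?_, by simp [Pi.single_apply, ite_smul]⟩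
  by_cases hij : j = i <;> simp [hij]

theorem boundedSpan_mono (b : ι → M) : Monotone (boundedSpan σ k b) := by
  intro m n hmn x hx
  obtain ⟨a, ha, rfl⟩ := mem_boundedSpan.1 hx
  exact mem_boundedSpan.2 ⟨a, fun i => (ha i).trans hmn, rfl⟩

theorem mem_span_of_mem_boundedSpan {b : ι → M} {n : ℕ} {x : M} (hx : x ∈ boundedSpan σ k b n) :
    x ∈ Submodule.span (MvPolynomial σ k) (Set.range b) := by
  obtain ⟨a, -, rfl⟩ := mem_boundedSpan.1 hx
  exact (Submodule.mem_span_range_iff_exists_fun _).2 ⟨a, rfl⟩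

theorem exists_mem_boundedSpan_of_mem_span {b : ι → M} {x : M}
    (hx : x ∈ Submodule.span (MvPolynomial σ k) (Set.range b)) :
    ∃ n, x ∈ boundedSpan σ k b n := by
  obtain ⟨a, rfl⟩ := (Submodule.mem_span_range_iff_exists_fun _).1 hx
  exact ⟨Finset.univ.sup fun i => (a i).totalDegree, mem_boundedSpan.2 ⟨a, fun i =>
    Finset.le_sup (f := fun i => (a i).totalDegree) (Finset.mem_univ i), rfl⟩⟩

theorem boundedSpan_smul (f : MvPolynomial σ k) (v : κ → M) (n : ℕ) :
    boundedSpan σ k (f • v) n =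
      (boundedSpan σ k v n).map ((LinearMap.lsmul (MvPolynomial σ k) M f).restrictScalars k) := by
  ext x
  simp [mem_boundedSpan, Finset.smul_sum, smul_comm f]

theorem finrank_boundedSpan_smul [Module.IsTorsionFree (MvPolynomial σ k) M]
    {f : MvPolynomial σ k} (hf : f ≠ 0) (v : κ → M) (n : ℕ) :
    Module.finrank k (boundedSpan σ k (f • v) n) = Module.finrank k (boundedSpan σ k v n) := by
  rw [boundedSpan_smul]
  exact (Submodule.equivMapOfInjective _ (smul_right_injective M hf) _).finrank_eq.symm

theorem boundedSpan_inf_boundedSpan_le {b : ι → M} {m : M} {p : MvPolynomial σ k} (hp : Prime p)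
    (hdvd : ∀ g : MvPolynomial σ k,
      g • m ∈ Submodule.span (MvPolynomial σ k) (Set.range b) → p ∣ g) (n : ℕ) :
    boundedSpan σ k b (n + 1) ⊓ boundedSpan σ k (fun _ : Unit => m) (n + 1) ≤
      boundedSpan σ k (fun _ : Unit => p • m) n := by
  rintro x ⟨hxb, hxm⟩
  obtain ⟨g, hg, rfl⟩ := mem_boundedSpan.1 hxm
  replace hg := hg ()
  obtain ⟨q, hq⟩ := hdvd (g ()) (by simpa using mem_span_of_mem_boundedSpan hxb)
  refine mem_boundedSpan.2 ⟨fun _ => q, fun _ => ?_, by simp [hq, smul_smul, mul_comm]⟩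
  rcases eq_or_ne q 0 with rfl | hq0
  · simp
  · rw [hq, totalDegree_mul_of_isDomain hp.ne_zero hq0] at hg
    have := totalDegree_ne_zero_of_not_isUnit hp.ne_zero hp.not_isUnit
    lia

section Finrank

variable [Fintype σ]

theorem finrank_pi_restrictTotalDegree (n : ℕ) :
    Module.finrank k (ι → restrictTotalDegree σ k n) =
      Fintype.card ι * (n + Fintype.card σ).choose (Fintype.card σ) := by
  simp [Module.finrank_pi_fintype, finrank_restrictTotalDegree]

theorem finrank_boundedSpan_le (b : ι → M) (n : ℕ) :
    Module.finrank k (boundedSpan σ k b n) ≤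
      Fintype.card ι * (n + Fintype.card σ).choose (Fintype.card σ) :=
  (LinearMap.finrank_range_le _).trans_eq (finrank_pi_restrictTotalDegree n)

theorem finrank_boundedSpan_of_linearIndependent {b : ι → M}
    (hb : LinearIndependent (MvPolynomial σ k) b) (n : ℕ) :
    Module.finrank k (boundedSpan σ k b n) =
      Fintype.card ι * (n + Fintype.card σ).choose (Fintype.card σ) := by
  have inj : Function.Injective (boundedCombination σ k b n) :=
    (LinearIndependent.fintypeLinearCombination_injective hb).comp
      fun _ _ h => funext fun i => Subtype.ext (congrFun h i)
  exact (LinearMap.finrank_range_of_inj inj).trans (finrank_pi_restrictTotalDegree n)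

theorem exists_finrank_boundedSpan_le [Module.IsTorsionFree (MvPolynomial σ k) M] {b : ι → M}
    {v : κ → M} (htors : ∀ l, ∃ f : MvPolynomial σ k,
      f ≠ 0 ∧ f • v l ∈ Submodule.span (MvPolynomial σ k) (Set.range b)) :
    ∃ s, ∀ n, Module.finrank k (boundedSpan σ k v n) ≤
      Fintype.card ι * (n + s + Fintype.card σ).choose (Fintype.card σ) := by
  classical
  choose f hf hfv using htors
  set F := ∏ l, f l with hF
  have F_ne_zero : F ≠ 0 := Finset.prod_ne_zero_iff.2 fun l _ => hf l
  have F_smul_mem (l : κ) : F • v l ∈ Submodule.span (MvPolynomial σ k) (Set.range b) := by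
    rw [hF, ← Finset.prod_erase_mul _ f (Finset.mem_univ l), mul_smul]
    exact Submodule.smul_mem _ _ (hfv l)
  choose s hs using fun l => exists_mem_boundedSpan_of_mem_span (F_smul_mem l)
  have F_smul_mem_boundedSpan (l : κ) : (F • v) l ∈ boundedSpan σ k b (Finset.univ.sup s) :=
    boundedSpan_mono b (Finset.le_sup (Finset.mem_univ l)) (hs l)
  refine ⟨Finset.univ.sup s, fun n => ?_⟩
  calc Module.finrank k (boundedSpan σ k v n)
      = Module.finrank k (boundedSpan σ k (F • v) n) :=
        (finrank_boundedSpan_smul F_ne_zero v n).symm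
    _ ≤ Module.finrank k (boundedSpan σ k b (n + Finset.univ.sup s)) :=
        Submodule.finrank_mono (boundedSpan_le_boundedSpan_add F_smul_mem_boundedSpan n)
    _ ≤ _ := finrank_boundedSpan_le b _

theorem le_finrank_boundedSpan [Module.IsTorsionFree (MvPolynomial σ k) M] {b : ι → M}
    (hb : LinearIndependent (MvPolynomial σ k) b) {m : M} {p : MvPolynomial σ k} (hp : Prime p)
    (hdvd : ∀ g : MvPolynomial σ k,
      g • m ∈ Submodule.span (MvPolynomial σ k) (Set.range b) → p ∣ g)
    {v : κ → M} (hbv : Set.range b ⊆ Set.range v) (hmv : m ∈ Set.range v) (n : ℕ) :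
    (Fintype.card ι + 1) * (n + 1 + Fintype.card σ).choose (Fintype.card σ) ≤
      Module.finrank k (boundedSpan σ k v (n + 1)) +
        (n + Fintype.card σ).choose (Fintype.card σ) := by
  have m_ne_zero : m ≠ 0 := by
    rintro rfl
    exact hp.not_isUnit (isUnit_of_dvd_one (hdvd 1 (by simp)))
  have hm : LinearIndependent (MvPolynomial σ k) fun _ : Unit => m :=
    LinearIndependent.of_subsingleton () m_ne_zero
  have sup_le : boundedSpan σ k b (n + 1) ⊔ boundedSpan σ k (fun _ : Unit => m) (n + 1) ≤
      boundedSpan σ k v (n + 1) := by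
    refine sup_le (boundedSpan_le_boundedSpan_add (s := 0) (fun i => ?_) _)
      (boundedSpan_le_boundedSpan_add (s := 0) (fun _ => ?_) _)
    · obtain ⟨l, hl⟩ := hbv ⟨i, rfl⟩
      exact hl ▸ apply_mem_boundedSpan_zero v l
    · obtain ⟨l, rfl⟩ := hmv
      exact apply_mem_boundedSpan_zero v l
  have inf_le := (Submodule.finrank_mono (boundedSpan_inf_boundedSpan_le hp hdvd n)).trans
    (finrank_boundedSpan_le _ n)
  have dim_formula := Submodule.finrank_sup_add_finrank_inf_eq (boundedSpan σ k b (n + 1))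
    (boundedSpan σ k (fun _ : Unit => m) (n + 1))
  rw [finrank_boundedSpan_of_linearIndependent hb, finrank_boundedSpan_of_linearIndependent hm,
    ← add_mul, Fintype.card_unit] at dim_formula
  rw [Fintype.card_unit, one_mul] at inf_le
  rw [← dim_formula]
  exact add_le_add (Submodule.finrank_mono sup_le) inf_le

theorem exists_finrank_boundedSpan_bounds_of_not_free [Module.IsTorsionFree (MvPolynomial σ k) M]
    {v : κ → M} (hv : Submodule.span (MvPolynomial σ k) (Set.range v) = ⊤)
    (hfree : ¬ Module.Free (MvPolynomial σ k) M) :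
    ∃ r s, ∀ n,
      Module.finrank k (boundedSpan σ k v n) ≤
        r * (n + s + Fintype.card σ).choose (Fintype.card σ) ∧
      (r + 1) * (n + 1 + Fintype.card σ).choose (Fintype.card σ) ≤
        Module.finrank k (boundedSpan σ k v (n + 1)) +
          (n + Fintype.card σ).choose (Fintype.card σ) := by
  classical
  obtain ⟨I, hI, hmax⟩ := exists_maximal_linearIndepOn (MvPolynomial σ k) v
  let b : I → M := fun i => v i
  have htors (l : κ) : ∃ f : MvPolynomial σ k,
      f ≠ 0 ∧ f • v l ∈ Submodule.span (MvPolynomial σ k) (Set.range b) := by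
    by_cases hl : l ∈ I
    · exact ⟨1, one_ne_zero, by
        rw [one_smul]; exact Submodule.subset_span ⟨⟨l, hl⟩, rfl⟩⟩
    · simpa [b, ← Set.image_eq_range] using hmax l hl
  obtain ⟨l, hl⟩ : ∃ l, v l ∉ Submodule.span (MvPolynomial σ k) (Set.range b) := by
    by_contra! hspan
    refine hfree (Module.Free.of_basis (Module.Basis.mk (v := b) hI ?_))
    exact hv ▸ Submodule.span_le.2 (Set.range_subset_iff.2 hspan)
  obtain ⟨p, hp, hdvd⟩ := exists_prime_forall_dvd_of_smul_mem_span hI hl (htors l)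
  obtain ⟨s, upper⟩ := exists_finrank_boundedSpan_le htors
  exact ⟨Fintype.card I, s, fun n => ⟨upper n, le_finrank_boundedSpan hI hp hdvd
    (Set.range_comp_subset_range Subtype.val v) ⟨l, rfl⟩ n⟩⟩

end Finrank

end BoundedSpan

section Grading

theorem finrank_finset_sup_of_supIndep {ι K V : Type*} [Field K] [AddCommGroup V] [Module K V]
    {A : ι → Submodule K V} [∀ i, Module.Finite K (A i)] {s : Finset ι} (hA : s.SupIndep A) :
    Module.finrank K (s.sup A : Submodule K V) = ∑ i ∈ s, Module.finrank K (A i) := by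
  classical
  induction s using Finset.induction with
  | empty => simp
  | insert i s hi ih =>
    have dim_formula := Submodule.finrank_sup_add_finrank_inf_eq (A i) (s.sup A)
    have disjoint : Disjoint (A i) (s.sup A) :=
      hA (Finset.subset_insert i s) (Finset.mem_insert_self i s) hi
    rw [disjoint.eq_bot, finrank_bot, add_zero, ih (hA.subset (Finset.subset_insert i s))]
      at dim_formula
    rw [Finset.sup_insert, Finset.sum_insert hi, dim_formula]

variable {σ k M : Type*} [Field k] [AddCommGroup M] [Module (MvPolynomial σ k) M] [Module k M]
  (ℳ : ℕ → Submodule k M)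

/-- The `k`-linear projection of `M = ⨁ j, ℳ j` onto its component of degree `j`, viewed as an
endomorphism of `M`. -/
noncomputable def gradedProj [DirectSum.Decomposition ℳ] (j : ℕ) : M →ₗ[k] M :=
  (ℳ j).subtype ∘ₗ DirectSum.component k ℕ (fun j => ℳ j) j ∘ₗ
    (DirectSum.decomposeLinearEquiv ℳ).toLinearMap

section Projection

variable {ℳ} [DirectSum.Decomposition ℳ]

theorem gradedProj_mem (j : ℕ) (x : M) : gradedProj ℳ j x ∈ ℳ j :=
  Subtype.property _

theorem gradedProj_of_mem {j : ℕ} {x : M} (hx : x ∈ ℳ j) : gradedProj ℳ j x = x :=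
  DirectSum.decompose_of_mem_same ℳ hx

theorem gradedProj_of_mem_of_ne {i j : ℕ} {x : M} (hx : x ∈ ℳ i) (hij : i ≠ j) :
    gradedProj ℳ j x = 0 :=
  DirectSum.decompose_of_mem_ne ℳ hx hij

variable [SetLike.GradedSMul (homogeneousSubmodule σ k) ℳ]

theorem gradedProj_smul (n : ℕ) (g : MvPolynomial σ k) (m : M) :
    gradedProj ℳ n (g • m) =
      ∑ x ∈ Finset.HasAntidiagonal.antidiagonal n,
        homogeneousComponent x.1 g • gradedProj ℳ x.2 m := by
  let : DirectSum.Decomposition (homogeneousSubmodule σ k) := decomposition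
  induction m using DirectSum.Decomposition.inductionOn ℳ with
  | zero => simp
  | add m m' hm hm' => simp only [smul_add, map_add, hm, hm', Finset.sum_add_distrib]
  | @homogeneous j m =>
    induction g using DirectSum.Decomposition.inductionOn (homogeneousSubmodule σ k) with
    | zero => simp
    | add g g' hg hg' => simp only [add_smul, map_add, hg, hg', Finset.sum_add_distrib]
    | @homogeneous i g =>
      have smul_mem : (g : MvPolynomial σ k) • (m : M) ∈ ℳ (i + j) :=
        SetLike.GradedSMul.smul_mem g.2 m.2
      have term_eq_zero (x : ℕ × ℕ) (hx : x ≠ (i, j)) :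
          homogeneousComponent x.1 (g : MvPolynomial σ k) • gradedProj ℳ x.2 (m : M) = 0 := by
        by_cases hi : x.1 = i
        · have hj : j ≠ x.2 := fun hj => hx (Prod.ext hi hj.symm)
          rw [gradedProj_of_mem_of_ne m.2 hj, smul_zero]
        · rw [homogeneousComponent_of_mem g.2, if_neg hi, zero_smul]
      by_cases hn : i + j = n
      · subst hn
        rw [gradedProj_of_mem smul_mem, Finset.sum_eq_single_of_mem (i, j)
          (Finset.HasAntidiagonal.mem_antidiagonal.2 rfl) fun x _ => term_eq_zero x,
          homogeneousComponent_of_mem g.2, if_pos rfl, gradedProj_of_mem m.2]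
      · rw [gradedProj_of_mem_of_ne smul_mem hn, Finset.sum_eq_zero]
        intro x hx
        exact term_eq_zero x fun h => hn (by simpa [h] using hx)

theorem gradedProj_smul_of_mem_zero (n : ℕ) (g : MvPolynomial σ k) {m : M} (hm : m ∈ ℳ 0) :
    gradedProj ℳ n (g • m) = homogeneousComponent n g • m := by
  rw [gradedProj_smul, Finset.sum_eq_single_of_mem (n, 0) (by simp), gradedProj_of_mem hm]
  rintro ⟨a, b⟩ hab hne
  have hb : 0 ≠ b := by
    rintro rfl
    exact hne (by simpa using hab)
  rw [gradedProj_of_mem_of_ne hm hb, smul_zero]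

theorem gradedProj_zero_smul (g : MvPolynomial σ k) (m : M) :
    gradedProj ℳ 0 (g • m) = homogeneousComponent 0 g • gradedProj ℳ 0 m := by
  simp [gradedProj_smul]

theorem exists_basis_mem_zero [Module.Free (MvPolynomial σ k) M]
    [Module.Finite (MvPolynomial σ k) M]
    (hgen : Submodule.span (MvPolynomial σ k) (ℳ 0 : Set M) = ⊤) :
    ∃ b : Module.Basis (Fin (Module.finrank (MvPolynomial σ k) M)) (MvPolynomial σ k) M,
      ∀ i, b i ∈ ℳ 0 := by
  let c := Module.finBasis (MvPolynomial σ k) M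
  have span_eq_top : ⊤ ≤ Submodule.span (MvPolynomial σ k)
      (Set.range fun i => gradedProj ℳ 0 (c i)) := by
    rw [← hgen, Submodule.span_le]
    intro x hx
    rw [← gradedProj_of_mem hx, ← c.sum_repr x, map_sum]
    refine Submodule.sum_mem _ fun i _ => ?_
    rw [gradedProj_zero_smul]
    exact Submodule.smul_mem _ _ (Submodule.subset_span ⟨i, rfl⟩)
  refine ⟨basisOfTopLeSpanOfCardEqFinrank _ span_eq_top (by simp), fun i => ?_⟩
  simpa using gradedProj_mem 0 (c i)

variable [IsScalarTower k (MvPolynomial σ k) M] {κ : Type*} [Fintype κ] {v : κ → M}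

theorem boundedSpan_eq_sup (hv₀ : ∀ l, v l ∈ ℳ 0)
    (hv : Submodule.span (MvPolynomial σ k) (Set.range v) = ⊤) (n : ℕ) :
    boundedSpan σ k v n = (Finset.range (n + 1)).sup ℳ := by
  apply le_antisymm
  · intro x hx
    obtain ⟨a, ha, rfl⟩ := mem_boundedSpan.1 hx
    refine Submodule.sum_mem _ fun l _ => ?_
    rw [← sum_homogeneousComponent (a l), Finset.sum_smul]
    refine Submodule.sum_mem _ fun j hj => ?_
    have hjn : j ∈ Finset.range (n + 1) := Finset.range_subset_range.2 (by grind) hj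
    refine Finset.le_sup (f := ℳ) hjn ?_
    simpa using SetLike.GradedSMul.smul_mem (homogeneousComponent_mem j (a l)) (hv₀ l)
  · refine Finset.sup_le fun j hj x hx => ?_
    obtain ⟨a, rfl⟩ := (Submodule.mem_span_range_iff_exists_fun _).1 
      (hv ▸ Submodule.mem_top (x := x))
    refine mem_boundedSpan.2 ⟨fun l => homogeneousComponent j (a l), fun l => ?_, ?_⟩
    · exact (homogeneousComponent_isHomogeneous j (a l)).totalDegree_le.trans
        (Finset.mem_range_succ_iff.1 hj)
    · simp only [← gradedProj_smul_of_mem_zero j _ (hv₀ _), ← map_sum, gradedProj_of_mem hx]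

theorem sum_finrank_eq_finrank_boundedSpan [Finite σ] (hv₀ : ∀ l, v l ∈ ℳ 0)
    (hv : Submodule.span (MvPolynomial σ k) (Set.range v) = ⊤) (n : ℕ) :
    ∑ j ∈ Finset.range (n + 1), Module.finrank k (ℳ j) =
      Module.finrank k (boundedSpan σ k v n) := by
  have (j : ℕ) : Module.Finite k (ℳ j) := by
    refine Submodule.finiteDimensional_of_le (S₂ := boundedSpan σ k v j) ?_
    rw [boundedSpan_eq_sup hv₀ hv]
    exact Finset.le_sup (Finset.self_mem_range_succ j)
  have indep := (DirectSum.Decomposition.isInternal ℳ).submodule_iSupIndep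
  rw [boundedSpan_eq_sup hv₀ hv, finrank_finset_sup_of_supIndep (indep.supIndep' _)]

variable {t : ℕ} {e : ℕ → ℤ}

theorem eventually_hilbertSum_eq_finrank_boundedSpan [Finite σ] (hv₀ : ∀ l, v l ∈ ℳ 0)
    (hv : Submodule.span (MvPolynomial σ k) (Set.range v) = ⊤)
    (he : IsHilbertPolyGraded k ℳ t e) :
    ∀ᶠ n in atTop, hilbertSum t e n = Module.finrank k (boundedSpan σ k v n) := by
  refine (eventually_atTop.2 he).mono fun n hn => ?_
  rw [← sum_finrank_eq_finrank_boundedSpan hv₀ hv, Nat.cast_sum]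
  exact hn.symm

theorem hilbertCoeff_one_eq_zero_of_free [Fintype σ] (hσ : Fintype.card σ = t + 1)
    [Module.Free (MvPolynomial σ k) M] [Module.Finite (MvPolynomial σ k) M]
    (hgen : Submodule.span (MvPolynomial σ k) (ℳ 0 : Set M) = ⊤)
    (he : IsHilbertPolyGraded k ℳ (t + 1) e) : e 1 = 0 := by
  obtain ⟨b, hb⟩ := exists_basis_mem_zero hgen
  have hilbert := eventually_hilbertSum_eq_finrank_boundedSpan hb b.span_eq he
  refine coeff_one_eq_zero_of_hilbertSum_eq (t := t) (r := Module.finrank (MvPolynomial σ k) M)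
    (hilbert.mono fun n hn => ?_)
  rw [hn, finrank_boundedSpan_of_linearIndependent b.linearIndependent, hσ, Fintype.card_fin,
    Nat.cast_mul]

theorem hilbertCoeff_one_neg_of_not_free [Fintype σ] (hσ : Fintype.card σ = t + 1)
    [Module.IsTorsionFree (MvPolynomial σ k) M] [Module.Finite (MvPolynomial σ k) M]
    (hgen : Submodule.span (MvPolynomial σ k) (ℳ 0 : Set M) = ⊤)
    (hfree : ¬ Module.Free (MvPolynomial σ k) M)
    (he : IsHilbertPolyGraded k ℳ (t + 1) e) : e 1 < 0 := by
  obtain ⟨S, hS₀, hS⟩ := (Submodule.fg_span_iff_fg_span_finset_subset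
    (R := MvPolynomial σ k) (ℳ 0 : Set M)).1 (hgen ▸ Module.Finite.fg_top)
  have hv : Submodule.span (MvPolynomial σ k) (Set.range (Subtype.val : S → M)) = ⊤ := by
    rw [← hgen, hS, Subtype.range_coe]
  have hilbert := eventually_hilbertSum_eq_finrank_boundedSpan (fun x : S => hS₀ x.2) hv he
  obtain ⟨r, s, bounds⟩ := exists_finrank_boundedSpan_bounds_of_not_free hv hfree
  simp only [hσ] at bounds
  refine coeff_one_neg_of_hilbertSum_bounds (t := t) (r := r) (s := s + (t + 1))
    (hilbert.mono fun n hn => ?_) ?_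
  · rw [hn, ← add_assoc]
    exact_mod_cast (bounds n).1
  · filter_upwards [hilbert, eventually_gt_atTop 0] with n hn hpos
    obtain ⟨n, rfl⟩ := Nat.exists_eq_add_one_of_ne_zero hpos.ne'
    have lower := (bounds n).2
    have pascal : (n + 1 + (t + 1)).choose (t + 1) =
        (n + 1 + t).choose t + (n + (t + 1)).choose (t + 1) := by
      rw [← add_assoc, Nat.choose_succ_succ', add_right_comm, add_assoc]
    rw [add_mul, one_mul, pascal] at lower
    rw [hn, pascal]
    norm_cast
    lia

theorem graded_free_iff_e1_zero_general [Fintype σ] [Nonempty σ]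
    [Module.IsTorsionFree (MvPolynomial σ k) M] [Module.Finite (MvPolynomial σ k) M]
    (hgen : Submodule.span (MvPolynomial σ k) (ℳ 0 : Set M) = ⊤)
    (he : IsHilbertPolyGraded k ℳ (Fintype.card σ) e) :
    Module.Free (MvPolynomial σ k) M ↔ e 1 = 0 := by
  obtain ⟨t, hσ⟩ := Nat.exists_eq_add_one_of_ne_zero (Fintype.card_ne_zero (α := σ))
  rw [hσ] at he
  refine ⟨fun _ => hilbertCoeff_one_eq_zero_of_free hσ hgen he, fun he₁ => ?_⟩
  by_contra hfree
  exact (hilbertCoeff_one_neg_of_not_free hσ hgen hfree he).ne he₁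

end Projection

end Grading

/-- **Theorem 5.4.** Let `R = k[x₁, …, x_d]`, `d ≥ 2`, be a polynomial ring over a field
`k` and let `M` be a nonzero finitely generated graded `R`-module generated in degree `0`.
If `M` is torsion-free, then `M` is free if and only if `e₁(M) = 0`. -/
theorem graded_free_iff_e1_zero (k : Type*) [Field k] (d : ℕ) (hd : 2 ≤ d)
    {M : Type*} [AddCommGroup M] [Module (MvPolynomial (Fin d) k) M] [Module k M]
    [IsScalarTower k (MvPolynomial (Fin d) k) M]
    [Module.Finite (MvPolynomial (Fin d) k) M] [Nontrivial M]
    [NoZeroSMulDivisors (MvPolynomial (Fin d) k) M]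
    (ℳ : ℕ → Submodule k M) (hgr : IsGrading k d M ℳ)
    (hgen : Submodule.span (MvPolynomial (Fin d) k) (ℳ 0 : Set M) = ⊤)
    (e : ℕ → ℤ) (he : IsHilbertPolyGraded k ℳ d e) :
    Module.Free (MvPolynomial (Fin d) k) M ↔ e 1 = 0 := by
  let := hgr.1.chooseDecomposition
  have : SetLike.GradedSMul (homogeneousSubmodule (Fin d) k) ℳ :=
    ⟨fun i j g m hg hm => hgr.2 i j g hg m hm⟩
  have : Nonempty (Fin d) := ⟨⟨0, by lia⟩⟩
  exact graded_free_iff_e1_zero_general hgen ((Fintype.card_fin d).symm ▸ he)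
end
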